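/- arXiv:2604.05304 — 4 statements merged into one kernel-verified Lean document; each statement's English description precedes it below -/
import Mathlib

section
/- Every squarefree positive integer with at most 44 distinct prime factors is matchable. -/
/-!
Let `P` be a set of `k ≤ 44` odd primes and `N = 2 ^ k`. If `n` is odd with prime factors `P`,
its divisors have to be matched with `M = {1, ..., N}`. If `n = 2 * Q` with `Q` odd with prime
factors `P`, then an even divisor `2 * d` is matched with an odd number at most `2 * N`, and an odd
divisor with `2 * j` where `j ≤ N`; so the divisors of `Q` have to be matched twice, once with
`M = {1, ..., N}` and once with `M` the set of odd numbers at most `2 * N`.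

A divisor `∏ (P \ A)` is coprime to `m` exactly when `A` contains `T m`, the set of primes of `P`
dividing `m`. By Hall's theorem, a matching exists as soon as every upward closed family `U` of
subsets of `P` satisfies `#{m ∈ M | T m ∈ U} ≤ #U` (`hall_inequality`).

*Lower bounds for `#U`.* If `U` contains `s` singletons and `e` pairs disjoint from them, a subset
outside `U` avoids the singletons and is an independent set of the graph formed by the pairs. A
graph with `v` vertices and `e` edges has at most `2 ^ v * (1 + 2 ^ (-e)) / 2` independent sets
(`two_pow_mul_card_indep_le`), which gives `card_upper_ge`.

*Upper bounds for the left side.* An `m` with `T m ∈ U` is divisible by one of the primes or pairs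
mentioned above, or else has at least `t` prime factors in `P`, with `t = 1`, `2` or `3`. The number
of multiples of an odd `d` in `M` is within a bounded error of `N / d`. The number of `m` having at
least `t` prime factors in `P` is bounded by a sieve: the indicator of `t ≤ x` is majorised by an
increasing integer combination of binomial coefficients `x.choose j`, which is summed over `M` by
inclusion and exclusion (`sieve`). The main term is the expectation for independent events of
probabilities `1 / p`, so it is largest when `P` consists of the first `k` odd primes
(`Dom.bern_le`), where it is evaluated for each `k ≤ 44`. Comparing the two kinds of bounds
according to the values of `s` and `e` proves the inequality.
-/

/-- A positive integer `n` is matchable if there is a bijection `ψ` from the set of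
divisors of `n` to `{1, 2, ..., τ(n)}` with `gcd(d, ψ(d)) = 1` for every divisor `d`. -/
def Matchable (n : ℕ) : Prop :=
  ∃ ψ : ℕ → ℕ, Set.BijOn ψ ↑n.divisors ↑(Finset.Icc 1 n.divisors.card) ∧
    ∀ d ∈ n.divisors, Nat.gcd d (ψ d) = 1

/-! ### Inclusion and exclusion -/

/-- The sum of `c j * l j` over the positions common to `c` and `l`. -/
def dotp : List ℤ → List ℕ → ℤ
  | a :: c, e :: l => a * e + dotp c l
  | _, _ => 0

/-- Multiplication of a polynomial, given by its coefficient list, by `p + X`, with a carry `b`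
added to the constant coefficient. -/
def addShift (p : ℕ) : ℕ → List ℕ → List ℕ
  | b, [] => [b]
  | b, a :: l => (p * a + b) :: addShift p a l

/-- The coefficients of `∏ (p + X)` over `p ∈ l`, lowest degree first. The entry at `j` is
`l.prod` times the `j`-th elementary symmetric function of the `1 / p`. -/
def coefs : List ℕ → List ℕ
  | [] => [1]
  | p :: l => addShift p 0 (coefs l)

/-- The forward difference of `g`. -/
def dlt (g : ℕ → ℤ) (x : ℕ) : ℤ := g (x + 1) - g x

/-- The expectation of `g X`, where `X` is the number of successes among independent events of
probabilities `1 / p`, `p ∈ l`. -/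
def bern : List ℕ → (ℕ → ℤ) → ℚ
  | [], g => g 0
  | p :: l, g => bern l g + (1 / p : ℚ) * bern l (dlt g)

/-- The sum of `φ (Δ ^ j g 0)` over `j`, with multiplicity `n.choose j`: the accumulated error of
the `2 ^ n` divisor counts used in inclusion and exclusion, if a count taken with coefficient `a`
costs an error `φ a`. -/
def errB (φ : ℤ → ℤ) : ℕ → (ℕ → ℤ) → ℤ
  | 0, g => φ (g 0)
  | n + 1, g => errB φ n g + errB φ n (dlt g)

/-- The number of multiples of `d` in `M`. -/
def cnt (M : Finset ℕ) (d : ℕ) : ℕ := (M.filter (fun m => d ∣ m)).card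

/-- Inclusion and exclusion for a function of the number of `p ∈ l` dividing `m`, restricted to
multiples of `d`. All quantities are doubled, so that half-integral errors become integral. -/
theorem sieve (M : Finset ℕ) (φ : ℤ → ℤ) (K : ℕ)
    (h : ∀ d, Odd d → ∀ a : ℤ, (2 * cnt M d * a : ℚ) ≤ 2 * K / d * a + φ a) :
    ∀ (l : List ℕ) (d : ℕ) (g : ℕ → ℤ), Odd d → (∀ p ∈ l, Odd p) → l.Pairwise Nat.Coprime →
      (∀ p ∈ l, Nat.Coprime d p) →
      ((2 * ∑ m ∈ M.filter (fun m => d ∣ m), g (l.countP (fun p => p ∣ m)) : ℤ) : ℚ)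
        ≤ (2 * K / d : ℚ) * bern l g + errB φ l.length g := by
  intro l
  induction l with
  | nil =>
    intro d g hd _ _ _
    have := h d hd (g 0)
    simp only [List.countP_nil, Finset.sum_const, bern, errB, List.length_nil]
    simp only [cnt] at this
    simp only [nsmul_eq_mul]
    push_cast
    linarith
  | cons p l ih =>
    intro d g hd hodd hpw hcop
    have hdp : Nat.Coprime d p := hcop p (by simp)
    have hp : Odd p := hodd p (by simp)
    rw [List.pairwise_cons] at hpw
    have i1 := ih d g hd (fun q hq => hodd q (by simp [hq])) hpw.2
      (fun q hq => hcop q (by simp [hq]))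
    have i2 := ih (d * p) (dlt g) (hd.mul hp) (fun q hq => hodd q (by simp [hq])) hpw.2
      (fun q hq => Nat.Coprime.mul_left (hcop q (by simp [hq])) (hpw.1 q hq))
    have key : ∑ m ∈ M.filter (fun m => d ∣ m), g ((p :: l).countP (fun p => p ∣ m)) =
        ∑ m ∈ M.filter (fun m => d ∣ m), g (l.countP (fun p => p ∣ m)) +
        ∑ m ∈ M.filter (fun m => d * p ∣ m), dlt g (l.countP (fun p => p ∣ m)) := by
      have : M.filter (fun m => d * p ∣ m) =
          (M.filter (fun m => d ∣ m)).filter (fun m => p ∣ m) := by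
        ext m
        simp only [Finset.mem_filter]
        constructor
        · rintro ⟨hm, hdm⟩
          exact ⟨⟨hm, (Dvd.intro _ rfl).trans hdm⟩, (Dvd.intro_left _ rfl).trans hdm⟩
        · rintro ⟨⟨hm, h1⟩, h2⟩
          exact ⟨hm, hdp.mul_dvd_of_dvd_of_dvd h1 h2⟩
      rw [this, Finset.sum_filter (s := M.filter (fun m => d ∣ m)), ← Finset.sum_add_distrib]
      refine Finset.sum_congr rfl fun m _ => ?_
      rw [List.countP_cons]
      by_cases hpm : p ∣ m <;> simp [hpm, dlt]
    rw [key]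
    have hp0 : (p : ℚ) ≠ 0 := by
      have := hp.pos
      positivity
    have hd0 : (d : ℚ) ≠ 0 := by
      have := hd.pos
      positivity
    simp only [bern, errB, List.length_cons]
    have e : (2 * K / (d * p : ℕ) : ℚ) = 2 * K / d * (1 / p) := by
      push_cast; field_simp
    rw [e] at i2
    push_cast at i1 i2 ⊢
    linarith

/-- The integer combination `∑ j, c j * x.choose j`. -/
def val (c : List ℤ) (x : ℕ) : ℤ := dotp c (coefs (List.replicate x 1))

theorem dotp_nil_left (l : List ℕ) : dotp [] l = 0 := by cases l <;> rfl
theorem dotp_nil_right (c : List ℤ) : dotp c [] = 0 := by cases c <;> rfl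

theorem dotp_addShift (p : ℕ) (l : List ℕ) : ∀ (b : ℕ) (a : ℤ) (c : List ℤ),
    dotp (a :: c) (addShift p b l) = p * dotp (a :: c) l + a * b + dotp c l := by
  induction l with
  | nil => intro b a c; simp [addShift, dotp, dotp_nil_right]
  | cons e l ih =>
    intro b a c
    cases c with
    | nil => simp [addShift, dotp]; ring
    | cons a' c' =>
      simp only [addShift, dotp] at ih ⊢
      rw [ih]; push_cast; ring

theorem dotp_coefs_cons (c : List ℤ) (p : ℕ) (l : List ℕ) :
    dotp c (coefs (p :: l)) = p * dotp c (coefs l) + dotp c.tail (coefs l) := by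
  cases c with
  | nil => simp [dotp_nil_left]
  | cons a c => simp [coefs, dotp_addShift]

theorem val_succ (c : List ℤ) (x : ℕ) : val c (x + 1) = val c x + val c.tail x := by
  simp [val, List.replicate_succ, dotp_coefs_cons]

theorem dlt_val (c : List ℤ) : dlt (val c) = val c.tail := by
  funext x; simp [dlt, val_succ]

theorem prod_mul_bern (l : List ℕ) : (∀ p ∈ l, 0 < p) → ∀ c : List ℤ,
    (l.prod : ℚ) * bern l (val c) = dotp c (coefs l) := by
  induction l with
  | nil => intro _ c; simp [bern, val]
  | cons p l ih =>
    intro hl c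
    have hp : (p : ℚ) ≠ 0 := by
      have := hl p (by simp)
      positivity
    have ih := ih (fun q hq => hl q (by simp [hq]))
    rw [dotp_coefs_cons, List.prod_cons, Nat.cast_mul, Int.cast_add, Int.cast_mul, Int.cast_natCast,
      ← ih, ← ih]
    simp only [bern, dlt_val]
    field_simp

theorem errB_val (φ : ℤ → ℤ) (h0 : φ 0 = 0) (n : ℕ) : ∀ c : List ℤ,
    errB φ n (val c) = dotp (c.map φ) (coefs (List.replicate n 1)) := by
  induction n with
  | zero =>
    intro c
    cases c with
    | nil => simp [errB, val, dotp_nil_left, h0]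
    | cons a c => simp [errB, val, coefs, dotp, dotp_nil_right]
  | succ n ih =>
    intro c
    simp [errB, dlt_val, ih, List.replicate_succ, dotp_coefs_cons]

/-! ### Comparison with the smallest primes -/

theorem bern_dlt (l : List ℕ) : ∀ g : ℕ → ℤ,
    bern l (dlt g) = bern l (fun x => g (x + 1)) - bern l g := by
  induction l with
  | nil => intro g; simp [bern, dlt]
  | cons p l ih =>
    intro g
    simp only [bern]
    have : dlt (fun x => g (x + 1)) = fun x => dlt g (x + 1) := rfl
    rw [this, ih (dlt g), ih g]
    ring

theorem bern_nonneg (l : List ℕ) : (∀ p ∈ l, 0 < p) → ∀ g : ℕ → ℤ,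
    (∀ x ≤ l.length, 0 ≤ g x) → 0 ≤ bern l g := by
  induction l with
  | nil => intro _ g hg; simpa [bern] using hg 0 (by simp)
  | cons p l ih =>
    intro hl g hg
    have ih := ih (fun q hq => hl q (by simp [hq]))
    have hp : (1 : ℚ) ≤ p := by exact_mod_cast hl p (by simp)
    have h1 : (1 / p : ℚ) ≤ 1 := by rw [div_le_one (by linarith)]; exact hp
    have h0 : (0 : ℚ) ≤ 1 / p := by positivity
    have a := ih g (fun x hx => hg x (by simp; omega))
    have b := ih (fun x => g (x + 1)) (fun x hx => hg _ (by simpa using hx))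
    simp only [bern, bern_dlt]
    nlinarith [mul_nonneg h0 b, mul_nonneg (sub_nonneg.2 h1) a]

/-- `Dom l R` means that `l` is at most as long as `R` and that its entries are at least the
entries of `R` at the same positions. -/
inductive Dom : List ℕ → List ℕ → Prop
  | nil (R : List ℕ) : Dom [] R
  | cons {p q : ℕ} {l R : List ℕ} : q ≤ p → Dom l R → Dom (p :: l) (q :: R)

/-- Smaller primes make more successes likely, so they increase the expectation of an increasing
function. -/
theorem Dom.bern_le {l R : List ℕ} (h : Dom l R) : (∀ q ∈ R, 0 < q) → ∀ g : ℕ → ℤ,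
    (∀ x < R.length, 0 ≤ dlt g x) → bern l g ≤ bern R g := by
  induction h with
  | nil R =>
    induction R with
    | nil => intro _ g _; exact le_rfl
    | cons q R ih =>
      intro hR g hg
      have hR' : ∀ r ∈ R, 0 < r := fun r hr => hR r (by simp [hr])
      have a := ih hR' g (fun x hx => hg x (by simp; omega))
      have b := bern_nonneg R hR' (dlt g) (fun x hx => hg x (by simp; omega))
      have : (0 : ℚ) ≤ 1 / q * bern R (dlt g) := by positivity
      calc _ ≤ bern R g := a
        _ ≤ _ := by simp only [bern]; linarith
  | @cons p q l R hqp _ ih =>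
    intro hR g hg
    have hR' : ∀ r ∈ R, 0 < r := fun r hr => hR r (by simp [hr])
    have hq : (1 : ℚ) ≤ q := by exact_mod_cast hR q (by simp)
    have hqp' : (q : ℚ) ≤ p := by exact_mod_cast hqp
    have a := ih hR' g (fun x hx => hg x (by simp; omega))
    have b := ih hR' (fun x => g (x + 1)) (fun x hx => hg (x + 1) (by simpa using hx))
    have c := bern_nonneg R hR' (dlt g) (fun x hx => hg x (by simp; omega))
    have h1 : (1 / p : ℚ) ≤ 1 := by rw [div_le_one (by linarith)]; linarith
    have h0 : (0 : ℚ) ≤ 1 / p := by positivity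
    have h2 : (1 / p : ℚ) ≤ 1 / q := one_div_le_one_div_of_le (by linarith) hqp'
    have d := mul_le_mul_of_nonneg_right h2 c
    have e := mul_le_mul_of_nonneg_left b h0
    have f := mul_le_mul_of_nonneg_left a (sub_nonneg.2 h1)
    simp only [bern]
    simp only [bern_dlt] at d ⊢
    nlinarith

theorem Dom.take {l R : List ℕ} (h : Dom l R) : ∀ n, l.length ≤ n → Dom l (R.take n) := by
  induction h with
  | nil R => intro n _; exact Dom.nil _
  | @cons p q l R hqp _ ih =>
    intro n hn
    obtain ⟨n, rfl⟩ : ∃ m, n = m + 1 := ⟨n - 1, by simp at hn; omega⟩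
    exact Dom.cons hqp (ih n (by simpa using hn))

/-- The criterion applies to a set of odd primes and the list of the first odd primes: its members
are on the list or exceed everything on it. -/
theorem dom_of_sorted (R : List ℕ) : ∀ l : List ℕ, R.Pairwise (· < ·) → l.Pairwise (· < ·) →
    (∀ p ∈ l, p ∈ R ∨ ∀ q ∈ R, q < p) → l.length ≤ R.length → Dom l R := by
  induction R with
  | nil =>
    intro l _ _ _ h
    have : l = [] := by simpa using h
    subst this; exact Dom.nil _
  | cons q R ih =>
    intro l hR hl hmem hlen
    cases l with
    | nil => exact Dom.nil _
    | cons p l =>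
      rw [List.pairwise_cons] at hR hl
      have hqp : q ≤ p := by
        rcases hmem p (by simp) with h | h
        · rcases List.mem_cons.1 h with rfl | h
          · exact le_rfl
          · exact (hR.1 p h).le
        · exact (h q (by simp)).le
      refine Dom.cons hqp (ih l hR.2 hl.2 ?_ (by simpa using hlen))
      intro x hx
      have hpx := hl.1 x hx
      rcases hmem x (by simp [hx]) with h | h
      · rcases List.mem_cons.1 h with rfl | h
        · omega
        · exact Or.inl h
      · exact Or.inr fun r hr => h r (by simp [hr])

/-! ### Numerical checks -/

/-- The first 44 odd primes. -/
def oddPrimes : List ℕ := [3, 5, 7, 11, 13, 17, 19, 23, 29, 31, 37, 41, 43, 47, 53, 59, 61, 67, 71,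
  73, 79, 83, 89, 97, 101, 103, 107, 109, 113, 127, 131, 137, 139, 149, 151, 157, 163, 167, 173,
  179, 181, 191, 193, 197]

/-- The error of a divisor count taken with coefficient `a`, when twice the count exceeds its main
term by at most `pos` and falls short of it by at most `neg`. -/
def phi (pos neg : ℕ) (a : ℤ) : ℤ := if 0 ≤ a then pos * a else neg * (-a)

/-- The test that the sieve with the majorant `val c / den`, main term `K / d` and `n` primes
dominated by `R` yields a count smaller than `B + 1`. Denominators are cleared. -/
def sieveTest (K pos neg : ℕ) (R : List ℕ) (n : ℕ) (den : ℕ) (c : List ℤ) (B : ℕ) : Bool :=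
  2 * K * dotp c (coefs R) + R.prod * dotp (c.map (phi pos neg)) (coefs (List.replicate n 1))
    < 2 * den * (B + 1) * R.prod

/-- Pairs `(den, c)` such that `val c / den` is a majorant of the indicator of `t ≤ x` for
`x ≤ 44`, increasing there. They are truncated inclusion-exclusion sums or small modifications of
these; which of them is best depends on `k`. -/
def cands : ℕ → List (ℕ × List ℤ)
  | 1 => [(1, [0, 1, -1, 1]), (4, [0, 4, -2, 1])]
  | 2 => [(1, [0, 0, 1, -2, 3]), (1, [0, 0, 1]), (1, [0, 0, 1, -2, 3, -4, 5]),
      (4, [0, 0, 4, -4, 2]), (8, [0, 0, 8, -4, 1])]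
  | 3 => [(1, [0, 0, 0, 1, -3, 6]), (1, [0, 0, 0, 1]), (1, [0, 0, 0, 1, -3, 6, -10, 15]),
      (4, [0, 0, 0, 4, -4, 2]), (4, [0, 0, 0, 4, -3, 1])]
  | 4 => [(4, [0, 0, 0, 0, 4, -10, 12]), (1, [0, 0, 0, 0, 1])]
  | 5 => [(1, [0, 0, 0, 0, 0, 1])]
  | _ => []

/-- The coefficient list for which `val` is `x.choose t`. -/
def unitVec (t : ℕ) : List ℤ := List.replicate t 0 ++ [1]

/-- The test that at most `B` elements of `M` have at least `t` prime factors in a set dominated by `R`,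
either by the union bound with `#{m ∈ M | d ∣ m} ≤ 2 * N / d`, or by one of the majorants in
`cands`. -/
def tailTest (t α k : ℕ) (R : List ℕ) (B : ℕ) : Bool :=
  sieveTest (2 * 2 ^ k) 0 0 R R.length 1 (unitVec t) B ||
  (cands t).any fun q => sieveTest (2 ^ k) α (2 - α) R R.length q.1 q.2 B

set_option maxRecDepth 100000 in
theorem check_one : ∀ k < 45, ∀ α < 2,
    tailTest 1 α k (oddPrimes.take k) (29 * 2 ^ k / 32) = true := by decide +kernel
set_option maxRecDepth 100000 in
theorem check_two : ∀ k < 45, ∀ α < 2,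
    tailTest 2 α k (oddPrimes.take k) (31 * 2 ^ k / 64) = true := by decide +kernel
set_option maxRecDepth 100000 in
theorem check_three : ∀ k < 45, ∀ α < 2,
    tailTest 3 α k (oddPrimes.take k) (182 * 2 ^ k / 1000) = true := by decide +kernel
set_option maxRecDepth 100000 in
theorem check_four : ∀ k < 45, ∀ α < 2,
    tailTest 4 α k (oddPrimes.take k) (2 ^ k / 16) = true := by decide +kernel
set_option maxRecDepth 100000 in
theorem check_five : ∀ k < 45, ∀ α < 2,
    tailTest 5 α k (oddPrimes.take k) (2 ^ k / 32) = true := by decide +kernel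
set_option maxRecDepth 100000 in
theorem check_two_erase : ∀ k < 45, ∀ α < 2,
    tailTest 2 α k (oddPrimes.tail.take (k - 1)) (308 * 2 ^ k / 1000) = true := by decide +kernel
set_option maxRecDepth 100000 in
theorem check_three_erase : ∀ k < 45, ∀ α < 2,
    tailTest 3 α k (oddPrimes.tail.take (k - 1)) (150 * 2 ^ k / 1000) = true := by decide +kernel
set_option maxRecDepth 100000 in
theorem check_large : ∀ t < 45, 6 ≤ t →
    2 * 2 ^ t * dotp (unitVec t) (coefs oddPrimes) ≤ oddPrimes.prod := by decide +kernel
set_option maxRecDepth 100000 in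
theorem cands_valid : ∀ t < 6, ∀ q ∈ cands t, 0 < q.1 ∧ ∀ x < 45,
    (if t ≤ x then (q.1 : ℤ) else 0) ≤ val q.2 x ∧ 0 ≤ val q.2.tail x := by decide +kernel
theorem mem_oddPrimes : ∀ p < 198, p.Prime → p ≠ 2 → p ∈ oddPrimes := by decide +kernel
theorem oddPrimes_sorted : oddPrimes.Pairwise (· < ·) := by decide +kernel

/-! ### Numbers with many prime factors -/

/-- `M` has `N` elements, and its number `c` of multiples of an odd `d` satisfies
`N / d - (1 - α / 2) ≤ c ≤ N / d + α / 2` and `c ≤ 2 * N / d`. The initial segment of length `N` has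
this property with `α = 0`, the set of the first `N` odd numbers has it with `α = 1`. -/
structure EvenlySpread (M : Finset ℕ) (N α : ℕ) : Prop where
  card_eq : M.card = N
  upper : ∀ d, Odd d → 2 * (d * cnt M d) ≤ 2 * N + α * d
  lower : ∀ d, Odd d → 2 * N + α * d ≤ 2 * (d * cnt M d) + 2 * d
  crude : ∀ d, Odd d → d * cnt M d ≤ 2 * N

/-- The number of elements of `M` with at least `t` divisors in `Q`. -/
def tailCount (M Q : Finset ℕ) (t : ℕ) : ℕ :=
  (M.filter (fun m => t ≤ (Q.filter (fun p => p ∣ m)).card)).card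

theorem Dom.length_le {l R : List ℕ} (h : Dom l R) : l.length ≤ R.length := by
  induction h with
  | nil R => simp
  | cons _ _ ih => simpa using ih

theorem countP_sort (Q : Finset ℕ) (m : ℕ) :
    (Q.sort).countP (fun p => p ∣ m) = (Q.filter (fun p => p ∣ m)).card := by
  have h : (Q.sort : Multiset ℕ) = Q.val := Finset.sort_eq Q (· ≤ ·)
  rw [Finset.card_def, Finset.filter_val, ← Multiset.countP_eq_card_filter, ← h,
    Multiset.coe_countP]

/-- The sieve bound for `tailCount` from a majorant `val c / den` of the indicator of `t ≤ x`. -/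
theorem tailCount_sieve {M Q : Finset ℕ} {K : ℕ} {φ : ℤ → ℤ} (hφ : φ 0 = 0)
    (h : ∀ d, Odd d → ∀ a : ℤ, (2 * cnt M d * a : ℚ) ≤ 2 * K / d * a + φ a)
    (hQ : ∀ p ∈ Q, p.Prime ∧ p ≠ 2) {R : List ℕ} (hR : ∀ q ∈ R, 0 < q) (hdom : Dom Q.sort R)
    {t den : ℕ} {c : List ℤ}
    (hc : ∀ x ≤ R.length, (if t ≤ x then (den : ℤ) else 0) ≤ val c x)
    (hc' : ∀ x < R.length, 0 ≤ val c.tail x) :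
    2 * den * tailCount M Q t * R.prod ≤
      2 * K * dotp c (coefs R) +
        R.prod * dotp (c.map φ) (coefs (List.replicate Q.card 1)) := by
  have hlen : Q.card ≤ R.length := by simpa using hdom.length_le
  have s := sieve M φ K h Q.sort 1 (val c) odd_one
    (fun p hp => (hQ p (by simpa using hp)).1.odd_of_ne_two (hQ p (by simpa using hp)).2)
    (by
      have : (Q.sort).Pairwise (· < ·) := (Finset.sortedLT_sort Q).pairwise
      refine List.Pairwise.imp_of_mem ?_ this
      intro a b ha hb hab
      exact (Nat.coprime_primes (hQ a (by simpa using ha)).1 (hQ b (by simpa using hb)).1).2 hab.ne)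
    (fun p _ => Nat.coprime_one_left p)
  rw [errB_val φ hφ] at s
  simp only [isUnit_one, IsUnit.dvd, Finset.filter_true, countP_sort, Finset.length_sort,
    Nat.cast_one, div_one] at s
  have hb := hdom.bern_le hR (val c) (fun x hx => by rw [dlt_val]; exact hc' x hx)
  have hsum : (den * tailCount M Q t : ℤ) ≤
      ∑ m ∈ M, val c (Q.filter (fun p => p ∣ m)).card := by
    calc (den * tailCount M Q t : ℤ)
        = ∑ m ∈ M, if t ≤ (Q.filter (fun p => p ∣ m)).card then (den : ℤ) else 0 := by
          rw [← Finset.sum_filter, Finset.sum_const, tailCount, nsmul_eq_mul, mul_comm]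
      _ ≤ _ := Finset.sum_le_sum fun m _ =>
          hc _ ((Finset.card_filter_le _ _).trans hlen)
  have hsum' : ((den * tailCount M Q t : ℤ) : ℚ) ≤
      ((∑ m ∈ M, val c (Q.filter (fun p => p ∣ m)).card : ℤ) : ℚ) := by exact_mod_cast hsum
  have hp := prod_mul_bern R hR c
  have hR0 : (0 : ℚ) ≤ R.prod := Nat.cast_nonneg _
  have hK : (0 : ℚ) ≤ 2 * K := by positivity
  rw [Int.cast_mul, Int.cast_ofNat] at s
  have s2 : (2 * (den * tailCount M Q t : ℤ) : ℚ) ≤ 2 * K * bern R (val c) +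
      (dotp (c.map φ) (coefs (List.replicate Q.card 1)) : ℤ) := by
    have := mul_le_mul_of_nonneg_left hb hK
    linarith
  have s3 := mul_le_mul_of_nonneg_left s2 hR0
  have : ((2 * den * tailCount M Q t * R.prod : ℤ) : ℚ) ≤
      ((2 * K * dotp c (coefs R) +
        R.prod * dotp (c.map φ) (coefs (List.replicate Q.card 1)) : ℤ) : ℚ) := by
    rw [Int.cast_add, Int.cast_mul (2 * (K : ℤ)), ← hp]
    simp only [Int.cast_mul, Int.cast_natCast, Int.cast_ofNat] at s3 ⊢
    linarith
  exact_mod_cast this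

theorem EvenlySpread.fine {M : Finset ℕ} {N α : ℕ} (hM : EvenlySpread M N α) (hα : α < 2) (d : ℕ)
    (hd : Odd d) (a : ℤ) :
    (2 * cnt M d * a : ℚ) ≤ 2 * N / d * a + phi α (2 - α) a := by
  have hd0 : (0 : ℚ) < d := by exact_mod_cast hd.pos
  have u : (2 * (d * cnt M d) : ℚ) ≤ 2 * N + α * d := by exact_mod_cast hM.upper d hd
  have l : (2 * N + α * d : ℚ) ≤ 2 * (d * cnt M d) + 2 * d := by exact_mod_cast hM.lower d hd
  have u' : (2 * cnt M d : ℚ) ≤ 2 * N / d + α := by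
    rw [← sub_le_iff_le_add, le_div_iff₀ hd0]; linarith
  have l' : (2 * N / d : ℚ) ≤ 2 * cnt M d + (2 - α) := by
    rw [div_le_iff₀ hd0]; linarith
  unfold phi
  split_ifs with ha
  · have ha' : (0 : ℚ) ≤ a := by exact_mod_cast ha
    push_cast
    nlinarith
  · have ha' : (a : ℚ) ≤ 0 := by exact_mod_cast (not_le.1 ha).le
    have : ((2 - α : ℕ) : ℚ) = 2 - α := by
      rw [Nat.cast_sub hα.le]; norm_num
    push_cast [this]
    nlinarith

/-- The bound `2 * N / d` for the number of multiples has no positive error. The error `4 * N` in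
the other direction only matters for negative coefficients, which `unitVec` does not have. -/
theorem EvenlySpread.coarse {M : Finset ℕ} {N α : ℕ} (hM : EvenlySpread M N α) (d : ℕ)
    (hd : Odd d) (a : ℤ) :
    (2 * cnt M d * a : ℚ) ≤ 2 * (2 * N : ℕ) / d * a + phi 0 (4 * N) a := by
  have hd1 : (1 : ℚ) ≤ d := by exact_mod_cast hd.pos
  have u : (d * cnt M d : ℚ) ≤ 2 * N := by exact_mod_cast hM.crude d hd
  have u' : (2 * cnt M d : ℚ) ≤ 2 * (2 * N : ℕ) / d := by
    rw [le_div_iff₀ (by linarith)]; push_cast; linarith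
  have l' : (2 * (2 * N : ℕ) / d : ℚ) ≤ 2 * cnt M d + 4 * N := by
    have : (0 : ℚ) ≤ cnt M d := by positivity
    have hN : (0 : ℚ) ≤ N := by positivity
    rw [div_le_iff₀ (by linarith)]; push_cast; nlinarith
  unfold phi
  split_ifs with ha
  · have ha' : (0 : ℚ) ≤ a := by exact_mod_cast ha
    push_cast at u' ⊢
    nlinarith
  · have ha' : (a : ℚ) ≤ 0 := by exact_mod_cast (not_le.1 ha).le
    push_cast at l' ⊢
    nlinarith

theorem dotp_nonneg (c : List ℤ) : (∀ a ∈ c, 0 ≤ a) → ∀ l, 0 ≤ dotp c l := by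
  induction c with
  | nil => intro _ l; simp [dotp_nil_left]
  | cons a c ih =>
    intro h l
    cases l with
    | nil => simp [dotp_nil_right]
    | cons e l =>
      have := ih (fun b hb => h b (by simp [hb])) l
      have ha := h a (by simp)
      simp only [dotp]
      positivity

theorem unit_nonneg (t : ℕ) : ∀ a ∈ unitVec t, (0 : ℤ) ≤ a := by
  intro a ha
  simp [unitVec] at ha
  omega

theorem val_unit (x : ℕ) : ∀ t, (if t ≤ x then ((1 : ℕ) : ℤ) else 0) ≤ val (unitVec t) x := by
  induction x with
  | zero =>
    intro t
    split_ifs with h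
    · obtain rfl : t = 0 := by omega
      decide
    · exact dotp_nonneg _ (unit_nonneg t) _
  | succ x ih =>
    intro t
    split_ifs with h
    · rw [val_succ]
      cases t with
      | zero =>
        have := ih 0
        simp only [Nat.zero_le, if_true] at this
        have h2 : val (unitVec 0).tail x = 0 := by simp [unitVec, val, dotp_nil_left]
        omega
      | succ t =>
        have := ih t
        rw [if_pos (by omega)] at this
        have h2 : (unitVec (t + 1)).tail = unitVec t := by simp [unitVec, List.replicate_succ]
        have h3 : 0 ≤ val (unitVec (t + 1)) x := dotp_nonneg _ (unit_nonneg _) _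
        rw [h2]
        omega
    · exact dotp_nonneg _ (unit_nonneg t) _

theorem unit_map_phi (t neg : ℕ) : (unitVec t).map (phi 0 neg) = List.replicate (t + 1) 0 := by
  simp [unitVec, phi, List.replicate_succ']

theorem dotp_zeros (n : ℕ) : ∀ l, dotp (List.replicate n 0) l = 0 := by
  induction n with
  | zero => intro l; simp [dotp_nil_left]
  | succ n ih =>
    intro l
    cases l with
    | nil => simp [dotp_nil_right]
    | cons e l => simp [List.replicate_succ, dotp, ih]

theorem EvenlySpread.tailCount_unit {M Q : Finset ℕ} {N α : ℕ} (hM : EvenlySpread M N α)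
    (hQ : ∀ p ∈ Q, p.Prime ∧ p ≠ 2) {R : List ℕ} (hR : ∀ q ∈ R, 0 < q) (hdom : Dom Q.sort R)
    (t : ℕ) : (tailCount M Q t * R.prod : ℤ) ≤ 2 * N * dotp (unitVec t) (coefs R) := by
  have := tailCount_sieve (φ := phi 0 (4 * N)) (by simp [phi]) hM.coarse hQ hR hdom
    (t := t) (den := 1) (c := unitVec t) (fun x _ => val_unit x t)
    (fun x _ => dotp_nonneg _ (fun a ha => unit_nonneg t a (List.mem_of_mem_tail ha)) _)
  rw [unit_map_phi, dotp_zeros] at this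
  push_cast [-Nat.cast_list_prod] at this
  linarith

theorem EvenlySpread.tailCount_le {M Q : Finset ℕ} {k α : ℕ} (hM : EvenlySpread M (2 ^ k) α) (hα : α < 2)
    (hQ : ∀ p ∈ Q, p.Prime ∧ p ≠ 2) {R : List ℕ} (hR : ∀ q ∈ R, 0 < q) (hdom : Dom Q.sort R)
    (hlen : Q.card = R.length) (hR44 : R.length ≤ 44) {t B : ℕ} (ht : t < 6)
    (h : tailTest t α k R B = true) : tailCount M Q t ≤ B := by
  have hR0 : (0 : ℤ) < R.prod := by exact_mod_cast List.prod_pos hR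
  rw [tailTest, Bool.or_eq_true] at h
  rcases h with h | h
  · have h1 := hM.tailCount_unit hQ hR hdom t
    rw [sieveTest, decide_eq_true_iff, unit_map_phi, dotp_zeros] at h
    push_cast [-Nat.cast_list_prod] at h h1
    have : (tailCount M Q t : ℤ) < B + 1 := by nlinarith
    omega
  · rw [List.any_eq_true] at h
    obtain ⟨q, hq, h⟩ := h
    obtain ⟨hden, hv⟩ := cands_valid t ht q hq
    have h1 := tailCount_sieve (φ := phi α (2 - α)) (by simp [phi]) (hM.fine hα) hQ hR hdom
      (t := t) (den := q.1) (c := q.2) (fun x hx => (hv x (by omega)).1)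
      (fun x hx => (hv x (by omega)).2)
    rw [sieveTest, decide_eq_true_iff] at h
    rw [hlen] at h1
    have h2 := h1.trans_lt h
    have hden' : (0 : ℤ) < q.1 := by exact_mod_cast hden
    have h3 : (tailCount M Q t : ℤ) * (2 * q.1 * R.prod) < (B + 1) * (2 * q.1 * R.prod) := by
      linarith
    have h4 := lt_of_mul_lt_mul_right h3 (by positivity)
    omega

theorem dom_oddPrimes {Q : Finset ℕ} (hQ : ∀ p ∈ Q, p.Prime ∧ p ≠ 2) (h : Q.card ≤ 44) :
    Dom Q.sort oddPrimes := by
  refine dom_of_sorted _ _ oddPrimes_sorted (Finset.sortedLT_sort Q).pairwise ?_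
    (by simpa [oddPrimes] using h)
  intro p hp
  have hp := hQ p (by simpa using hp)
  by_cases h198 : p < 198
  · exact Or.inl (mem_oddPrimes p h198 hp.1 hp.2)
  · have : ∀ q ∈ oddPrimes, q < 198 := by decide
    exact Or.inr fun q hq => (this q hq).trans_le (by omega)

theorem dom_oddPrimes_tail {Q : Finset ℕ} (hQ : ∀ p ∈ Q, p.Prime ∧ p ≠ 2) (h3 : 3 ∉ Q)
    (h : Q.card ≤ 43) : Dom Q.sort oddPrimes.tail := by
  refine dom_of_sorted _ _ oddPrimes_sorted.tail (Finset.sortedLT_sort Q).pairwise ?_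
    (by simpa [oddPrimes] using h)
  intro p hp
  have hpQ : p ∈ Q := by simpa using hp
  have hp := hQ p hpQ
  by_cases h198 : p < 198
  · left
    have h1 := mem_oddPrimes p h198 hp.1 hp.2
    have : oddPrimes = 3 :: oddPrimes.tail := rfl
    rw [this, List.mem_cons] at h1
    rcases h1 with rfl | h1
    · exact absurd hpQ h3
    · exact h1
  · have : ∀ q ∈ oddPrimes.tail, q < 198 := by decide
    exact Or.inr fun q hq => (this q hq).trans_le (by omega)

theorem oddPrimes_pos : ∀ q ∈ oddPrimes, 0 < q := by decide

section
variable {M P : Finset ℕ} {k α : ℕ}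

theorem tailCount_le_of_ok (hM : EvenlySpread M (2 ^ k) α) (hα : α < 2)
    (hP : ∀ p ∈ P, p.Prime ∧ p ≠ 2) (hPk : P.card = k) (hk : k ≤ 44) {t B : ℕ} (ht : t < 6)
    (h : tailTest t α k (oddPrimes.take k) B = true) : tailCount M P t ≤ B :=
  hM.tailCount_le hα hP (fun q hq => oddPrimes_pos q (List.mem_of_mem_take hq))
    ((dom_oddPrimes hP (by omega)).take k (by simp [hPk]))
    (by rw [hPk, List.length_take, show oddPrimes.length = 44 from rfl]; omega)
    (by rw [List.length_take, show oddPrimes.length = 44 from rfl]; omega) ht h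

theorem tailCount_erase_le_of_ok (hM : EvenlySpread M (2 ^ k) α) (hα : α < 2)
    (hP : ∀ p ∈ P, p.Prime ∧ p ≠ 2) (hPk : P.card = k) (hk : k ≤ 44) (h3 : 3 ∈ P) {t B : ℕ}
    (ht : t < 6) (h : tailTest t α k (oddPrimes.tail.take (k - 1)) B = true) :
    tailCount M (P.erase 3) t ≤ B := by
  have hc : (P.erase 3).card = k - 1 := by rw [Finset.card_erase_of_mem h3, hPk]
  have hP' : ∀ p ∈ P.erase 3, p.Prime ∧ p ≠ 2 := fun p hp => hP p (Finset.mem_of_mem_erase hp)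
  exact hM.tailCount_le hα hP'
    (fun q hq => oddPrimes_pos q (List.mem_of_mem_tail (List.mem_of_mem_take hq)))
    ((dom_oddPrimes_tail hP' (by simp) (by omega)).take (k - 1) (by simp [hc]))
    (by rw [hc, List.length_take, show oddPrimes.tail.length = 43 from rfl]; omega)
    (by rw [List.length_take, show oddPrimes.tail.length = 43 from rfl]; omega) ht h

theorem two_pow_mul_tailCount_le (hM : EvenlySpread M (2 ^ k) α)
    (hP : ∀ p ∈ P, p.Prime ∧ p ≠ 2) (hPk : P.card = k) (hk : k ≤ 44) {t : ℕ} (ht6 : 6 ≤ t)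
    (ht : t < 45) : 2 ^ t * tailCount M P t ≤ 2 ^ k := by
  have h1 := hM.tailCount_unit hP oddPrimes_pos (dom_oddPrimes hP (by omega)) t
  have h2 := check_large t ht ht6
  have hR0 : (0 : ℤ) < oddPrimes.prod := by exact_mod_cast List.prod_pos oddPrimes_pos
  push_cast [-Nat.cast_list_prod] at h1
  generalize (oddPrimes.prod : ℕ) = W at *
  generalize dotp (unitVec t) (coefs oddPrimes) = D at *
  have h3 : (2 ^ t * tailCount M P t : ℤ) * W ≤ 2 ^ k * W := by
    calc (2 ^ t * tailCount M P t : ℤ) * W = 2 ^ t * (tailCount M P t * W) := by ring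
      _ ≤ 2 ^ t * (2 * 2 ^ k * D) := by gcongr
      _ = 2 ^ k * (2 * 2 ^ t * D) := by ring
      _ ≤ _ := by gcongr
  exact_mod_cast le_of_mul_le_mul_right h3 hR0

end

/-! ### Size of upward closed families -/

/-- The subsets of `V` containing no member of `E`; these are the independent sets of a graph when
`E` consists of pairs. -/
def indep (V : Finset ℕ) (E : Finset (Finset ℕ)) : Finset (Finset ℕ) :=
  V.powerset.filter (fun A => ∀ B ∈ E, ¬ B ⊆ A)

theorem indep_insert_le (x : ℕ) (V : Finset ℕ) (E : Finset (Finset ℕ)) :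
    (indep (insert x V) E).card ≤ (indep V (E.filter (fun B => x ∉ B))).card +
      (V.powerset.filter (fun A => ∀ B ∈ E, ¬ B ⊆ insert x A)).card := by
  have hsub : indep (insert x V) E ⊆ indep V (E.filter (fun B => x ∉ B)) ∪
      (V.powerset.filter (fun A => ∀ B ∈ E, ¬ B ⊆ insert x A)).image (insert x) := by
    intro A hA
    simp only [indep, Finset.mem_filter, Finset.mem_powerset, Finset.mem_union,
      Finset.mem_image] at hA ⊢
    by_cases hxA : x ∈ A
    · right
      refine ⟨A.erase x, ⟨?_, ?_⟩, Finset.insert_erase hxA⟩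
      · intro y hy
        have := hA.1 (Finset.mem_of_mem_erase hy)
        rw [Finset.mem_insert] at this
        exact this.resolve_left (Finset.ne_of_mem_erase hy)
      · rw [Finset.insert_erase hxA]; exact hA.2
    · left
      exact ⟨(Finset.subset_insert_iff_of_notMem hxA).1 hA.1, fun B hB => hA.2 B hB.1⟩
  exact (Finset.card_le_card hsub).trans ((Finset.card_union_le _ _).trans
    (Nat.add_le_add_left Finset.card_image_le _))

/-- A graph with `e` edges on `v` vertices has at most `2 ^ v * (2 ^ e + 1) / 2 ^ (e + 1)` independent
sets, with equality for stars. Removing a vertex of degree `d ≥ 1` leaves `e - d` edges, and the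
independent sets through it avoid its `d` neighbours; the induction closes because
`2 ^ d + 2 ^ (e + 1 - d) ≤ 2 ^ e + 2`. -/
theorem two_pow_mul_card_indep_le (V : Finset ℕ) : ∀ E : Finset (Finset ℕ),
    (∀ B ∈ E, B ⊆ V ∧ B.card = 2) →
    2 ^ (E.card + 1) * (indep V E).card ≤ 2 ^ V.card * (2 ^ E.card + 1) := by
  induction V using Finset.induction_on with
  | empty =>
    intro E hE
    have : E = ∅ := by
      rw [Finset.eq_empty_iff_forall_notMem]
      intro B hB
      obtain ⟨h1, h2⟩ := hE B hB
      rw [Finset.subset_empty] at h1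
      simp [h1] at h2
    subst this
    simp [indep]
  | insert x V hx ih =>
    intro E hE
    set E₁ := E.filter (fun B => x ∉ B) with hE₁
    set E₂ := E.filter (fun B => ¬ x ∉ B) with hE₂
    have hcard : E₁.card + E₂.card = E.card := Finset.card_filter_add_card_filter_not _
    have ih1 := ih E₁ (fun B hB => by
      rw [hE₁, Finset.mem_filter] at hB
      exact ⟨(Finset.subset_insert_iff_of_notMem hB.2).1 (hE B hB.1).1, (hE B hB.1).2⟩)
    have hle := indep_insert_le x V E
    rw [← hE₁] at hle
    rw [Finset.card_insert_of_notMem hx]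
    set X := V.powerset.filter (fun A => ∀ B ∈ E, ¬ B ⊆ insert x A) with hX
    set Nb := V.filter (fun y => {x, y} ∈ E) with hNb
    have hd : E₂.card ≤ Nb.card := by
      have : E₂ ⊆ Nb.image (fun y => {x, y}) := by
        intro B hB
        rw [hE₂, Finset.mem_filter, not_not] at hB
        obtain ⟨hBV, hB2⟩ := hE B hB.1
        obtain ⟨y, hy⟩ := Finset.card_eq_one.1
          (show (B.erase x).card = 1 by rw [Finset.card_erase_of_mem hB.2, hB2])
        have hBe : B = {x, y} := by rw [← Finset.insert_erase hB.2, hy]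
        have hyB : y ∈ B.erase x := by rw [hy]; simp
        have hyV : y ∈ V := by
          have := hBV (Finset.mem_of_mem_erase hyB)
          rw [Finset.mem_insert] at this
          exact this.resolve_left (Finset.ne_of_mem_erase hyB)
        rw [Finset.mem_image]
        exact ⟨y, by rw [hNb, Finset.mem_filter]; exact ⟨hyV, hBe ▸ hB.1⟩, hBe.symm⟩
      exact (Finset.card_le_card this).trans Finset.card_image_le
    have hNbV : Nb.card ≤ V.card := Finset.card_filter_le _ _
    have hXc : X.card ≤ 2 ^ (V.card - E₂.card) := by
      have : X ⊆ (V \ Nb).powerset := by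
        intro A hA
        rw [hX, Finset.mem_filter, Finset.mem_powerset] at hA
        rw [Finset.mem_powerset]
        intro y hy
        rw [Finset.mem_sdiff]
        refine ⟨hA.1 hy, fun hyN => ?_⟩
        rw [hNb, Finset.mem_filter] at hyN
        refine hA.2 _ hyN.2 ?_
        intro z hz
        rw [Finset.mem_insert, Finset.mem_singleton] at hz
        rcases hz with rfl | rfl
        · simp
        · simp [hy]
      calc X.card ≤ _ := Finset.card_le_card this
        _ = 2 ^ (V.card - Nb.card) := by
          rw [Finset.card_powerset, Finset.card_sdiff_of_subset (Finset.filter_subset _ _)]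
        _ ≤ _ := Nat.pow_le_pow_right (by norm_num) (by omega)
    rcases Nat.eq_zero_or_pos E₂.card with h0 | h1
    · have hX' : X.card ≤ (indep V E₁).card := by
        refine Finset.card_le_card fun A hA => ?_
        rw [hX, Finset.mem_filter] at hA
        rw [indep, Finset.mem_filter]
        refine ⟨hA.1, fun B hB hBA => hA.2 B (Finset.mem_of_mem_filter _ hB) ?_⟩
        exact hBA.trans (Finset.subset_insert _ _)
      have : E₁.card = E.card := by omega
      rw [this] at ih1
      rw [pow_succ 2 V.card]
      nlinarith [Nat.zero_le (2 ^ (E.card + 1))]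
    · obtain ⟨w, hw⟩ : ∃ w, V.card = E₂.card + w := ⟨V.card - E₂.card, by omega⟩
      rw [show V.card - E₂.card = w by omega] at hXc
      rw [hw] at ih1 ⊢
      rw [← hcard]
      obtain ⟨d, hd'⟩ : ∃ d, E₂.card = d + 1 := ⟨E₂.card - 1, by omega⟩
      rw [hd'] at ih1 ⊢
      generalize E₁.card = f at *
      generalize (indep V E₁).card = I at *
      have hf : 1 ≤ 2 ^ f := Nat.one_le_two_pow
      have hdd : 1 ≤ 2 ^ d := Nat.one_le_two_pow
      have e1 : 2 ^ (f + (d + 1) + 1) * (indep (insert x V) E).card ≤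
          2 ^ (f + (d + 1) + 1) * (I + 2 ^ w) := Nat.mul_le_mul_left _ (by omega)
      refine e1.trans ?_
      have e2 := Nat.mul_le_mul_left (2 ^ (d + 1)) ih1
      simp only [pow_add, pow_one] at e2 ⊢
      generalize 2 ^ f = F at *
      generalize 2 ^ d = D at *
      generalize 2 ^ w = W at *
      obtain ⟨F, rfl⟩ : ∃ F', F = F' + 1 := ⟨F - 1, by omega⟩
      obtain ⟨D, rfl⟩ : ∃ D', D = D' + 1 := ⟨D - 1, by omega⟩
      have e3 : 0 ≤ W * (D + 1) * (D * F) := Nat.zero_le _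
      nlinarith

section
variable {P : Finset ℕ} {U : Finset (Finset ℕ)}

theorem card_upper_ge (hUP : U ⊆ P.powerset) (hup : ∀ A ∈ U, ∀ B ⊆ P, A ⊆ B → B ∈ U)
    {S : Finset ℕ} (hS : S ⊆ P) (hSU : ∀ p ∈ S, {p} ∈ U) {E : Finset (Finset ℕ)}
    (hE : ∀ B ∈ E, B ∈ U ∧ B ⊆ P \ S ∧ B.card = 2) {s e : ℕ} (hs : s ≤ S.card)
    (he : e ≤ E.card) :
    2 ^ (s + e + 1) * 2 ^ P.card ≤ 2 ^ (s + e + 1) * U.card + 2 ^ P.card * (2 ^ e + 1) := by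
  obtain ⟨E', hE'E, rfl⟩ := Finset.exists_subset_card_eq he
  have hsub : P.powerset \ U ⊆ indep (P \ S) E' := by
    intro A hA
    rw [Finset.mem_sdiff, Finset.mem_powerset] at hA
    rw [indep, Finset.mem_filter, Finset.mem_powerset]
    refine ⟨fun p hp => Finset.mem_sdiff.2 ⟨hA.1 hp, fun hpS => ?_⟩, fun B hB hBA => ?_⟩
    · exact hA.2 (hup _ (hSU p hpS) A hA.1 (by simpa using hp))
    · exact hA.2 (hup B (hE B (hE'E hB)).1 A hA.1 hBA)
  have h1 := Finset.card_le_card hsub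
  rw [Finset.card_sdiff_of_subset hUP, Finset.card_powerset] at h1
  have h2 := two_pow_mul_card_indep_le (P \ S) E' (fun B hB => (hE B (hE'E hB)).2)
  rw [Finset.card_sdiff_of_subset hS] at h2
  have hSP := Finset.card_le_card hS
  have h3 : 2 ^ P.card ≤ U.card + (indep (P \ S) E').card := by omega
  have h4 : 2 ^ s * 2 ^ (P.card - S.card) ≤ 2 ^ P.card := by
    rw [← pow_add]; exact Nat.pow_le_pow_right (by norm_num) (by omega)
  calc 2 ^ (s + E'.card + 1) * 2 ^ P.card
      ≤ 2 ^ (s + E'.card + 1) * (U.card + (indep (P \ S) E').card) := Nat.mul_le_mul_left _ h3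
    _ = 2 ^ (s + E'.card + 1) * U.card +
        2 ^ s * (2 ^ (E'.card + 1) * (indep (P \ S) E').card) := by ring
    _ ≤ 2 ^ (s + E'.card + 1) * U.card +
        2 ^ s * (2 ^ (P.card - S.card) * (2 ^ E'.card + 1)) := by gcongr
    _ = 2 ^ (s + E'.card + 1) * U.card +
        (2 ^ s * 2 ^ (P.card - S.card)) * (2 ^ E'.card + 1) := by ring
    _ ≤ _ := by gcongr

theorem card_upper_ge_of_mem (hUP : U ⊆ P.powerset) (hup : ∀ A ∈ U, ∀ B ⊆ P, A ⊆ B → B ∈ U)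
    {A : Finset ℕ} (hA : A ∈ U) : 2 ^ P.card ≤ 2 ^ A.card * U.card := by
  have hAP := Finset.mem_powerset.1 (hUP hA)
  have h : Finset.Icc A P ⊆ U := fun B hB => by
    rw [Finset.mem_Icc] at hB
    exact hup A hA B hB.2 hB.1
  have h1 := Finset.card_le_card h
  rw [Finset.card_Icc_finset hAP] at h1
  have h2 := Finset.card_le_card hAP
  calc 2 ^ P.card = 2 ^ A.card * 2 ^ (P.card - A.card) := by rw [← pow_add]; congr 1; omega
    _ ≤ _ := by gcongr

theorem card_upper_ge_of_two_triples (hUP : U ⊆ P.powerset)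
    (hup : ∀ A ∈ U, ∀ B ⊆ P, A ⊆ B → B ∈ U) {A B : Finset ℕ} (hA : A ∈ U) (hB : B ∈ U)
    (hA3 : A.card = 3) (hB3 : B.card = 3) (hAB : A ≠ B) :
    3 * 2 ^ P.card ≤ 16 * U.card := by
  have hAP := Finset.mem_powerset.1 (hUP hA)
  have hBP := Finset.mem_powerset.1 (hUP hB)
  have h : Finset.Icc A P ∪ Finset.Icc B P ⊆ U := fun C hC => by
    rw [Finset.mem_union, Finset.mem_Icc, Finset.mem_Icc] at hC
    rcases hC with hC | hC
    · exact hup A hA C hC.2 hC.1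
    · exact hup B hB C hC.2 hC.1
  have h1 := Finset.card_le_card h
  have h2 := Finset.card_union_add_card_inter (Finset.Icc A P) (Finset.Icc B P)
  have h3 : Finset.Icc A P ∩ Finset.Icc B P ⊆ Finset.Icc (A ∪ B) P := fun C hC => by
    rw [Finset.mem_inter, Finset.mem_Icc, Finset.mem_Icc] at hC
    exact Finset.mem_Icc.2 ⟨Finset.union_subset hC.1.1 hC.2.1, hC.1.2⟩
  have h4 := Finset.card_le_card h3
  have hABP := Finset.union_subset hAP hBP
  rw [Finset.card_Icc_finset hABP] at h4
  rw [Finset.card_Icc_finset hAP, Finset.card_Icc_finset hBP, hA3, hB3] at h2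
  have h5 : 4 ≤ (A ∪ B).card := by
    by_contra hlt
    have e1 : A = A ∪ B := Finset.eq_of_subset_of_card_le Finset.subset_union_left (by omega)
    have e2 : B = A ∪ B := Finset.eq_of_subset_of_card_le Finset.subset_union_right (by omega)
    exact hAB (e1.trans e2.symm)
  have h6 := Finset.card_le_card hABP
  obtain ⟨w, hw⟩ : ∃ w, P.card = w + 4 := ⟨P.card - 4, by omega⟩
  have h7 : 2 ^ (P.card - (A ∪ B).card) ≤ 2 ^ w := Nat.pow_le_pow_right (by norm_num) (by omega)
  rw [show P.card - 3 = w + 1 by omega, pow_succ] at h2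
  rw [hw, pow_add]
  omega

end

/-! ### The Hall inequality -/

theorem exists_lt_of_card_two {S : Finset ℕ} (h : S.card = 2) :
    ∃ x y, x < y ∧ S = {x, y} := by
  obtain ⟨x, y, hxy, rfl⟩ := Finset.card_eq_two.1 h
  rcases lt_or_gt_of_ne hxy with h | h
  · exact ⟨x, y, h, rfl⟩
  · exact ⟨y, x, h, Finset.pair_comm x y⟩

theorem exists_lt_of_card_three {S : Finset ℕ} (h : S.card = 3) :
    ∃ x y z, x < y ∧ y < z ∧ S = {x, y, z} := by
  have hne : S.Nonempty := Finset.card_pos.1 (by omega)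
  have hz := S.max'_mem hne
  obtain ⟨x, y, hxy, hS⟩ := exists_lt_of_card_two
    (show (S.erase (S.max' hne)).card = 2 by rw [Finset.card_erase_of_mem hz, h])
  have hy : y ∈ S.erase (S.max' hne) := by rw [hS]; simp
  refine ⟨x, y, S.max' hne, hxy,
    lt_of_le_of_ne (S.le_max' y (Finset.mem_of_mem_erase hy)) (Finset.ne_of_mem_erase hy), ?_⟩
  have h1 := Finset.insert_erase hz
  rw [hS] at h1
  refine h1.symm.trans ?_
  ext w
  simp only [Finset.mem_insert, Finset.mem_singleton]
  tauto

theorem EvenlySpread.cnt_le {M : Finset ℕ} {N α : ℕ} (hM : EvenlySpread M N α) (hα : α < 2)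
    {q d : ℕ} (hd : Odd d) (hqd : q ≤ d) : 2 * q * cnt M d ≤ 2 * N + q := by
  have h1 := hM.upper d hd
  have hd0 := hd.pos
  have h2 : α * d ≤ 1 * d := Nat.mul_le_mul_right _ (by omega)
  have h3 : q * (2 * (d * cnt M d)) ≤ q * (2 * N + d) := Nat.mul_le_mul_left _ (by omega)
  have h4 : q * (2 * N) ≤ d * (2 * N) := Nat.mul_le_mul_right _ hqd
  have h5 : d * (2 * q * cnt M d) ≤ d * (2 * N + q) := by nlinarith
  exact Nat.le_of_mul_le_mul_left h5 hd0

section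
variable {M P : Finset ℕ} {k α : ℕ}

theorem prime_odd {p : ℕ} (hp : p.Prime ∧ p ≠ 2) : Odd p ∧ 3 ≤ p :=
  ⟨hp.1.odd_of_ne_two hp.2, by have := hp.1.two_le; have := hp.2; omega⟩

theorem sum_cnt_one {N : ℕ} (hM : EvenlySpread M N α) (hα : α < 2) {S : Finset ℕ} {a : ℕ}
    (hS : ∀ p ∈ S, Odd p ∧ a ≤ p) (h : S.card = 1) :
    2 * a * ∑ p ∈ S, cnt M p ≤ 2 * N + a := by
  obtain ⟨x, rfl⟩ := Finset.card_eq_one.1 h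
  have hx := hS x (by simp)
  simpa using hM.cnt_le hα hx.1 hx.2

theorem sum_cnt_two {N : ℕ} (hM : EvenlySpread M N α) (hα : α < 2) {S : Finset ℕ} {a : ℕ}
    (ha : Odd a) (hS : ∀ p ∈ S, Odd p ∧ a ≤ p) (h : S.card = 2) :
    ∃ u v, ∑ p ∈ S, cnt M p = u + v ∧ 2 * a * u ≤ 2 * N + a ∧
      2 * (a + 2) * v ≤ 2 * N + (a + 2) := by
  obtain ⟨x, y, hxy, rfl⟩ := exists_lt_of_card_two h
  have hx := hS x (by simp)
  have hy := hS y (by simp)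
  obtain ⟨i, hi⟩ := ha
  obtain ⟨i', hi'⟩ := hx.1
  obtain ⟨j, hj⟩ := hy.1
  exact ⟨cnt M x, cnt M y, Finset.sum_pair hxy.ne, hM.cnt_le hα hx.1 hx.2,
    hM.cnt_le hα hy.1 (by omega)⟩

theorem sum_cnt_three {N : ℕ} (hM : EvenlySpread M N α) (hα : α < 2) {S : Finset ℕ}
    (hS : ∀ p ∈ S, Odd p ∧ 3 ≤ p) (h : S.card = 3) :
    ∃ u v w, ∑ p ∈ S, cnt M p = u + v + w ∧ 6 * u ≤ 2 * N + 3 ∧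
      10 * v ≤ 2 * N + 5 ∧ 14 * w ≤ 2 * N + 7 := by
  obtain ⟨x, y, z, hxy, hyz, rfl⟩ := exists_lt_of_card_three h
  have hx := hS x (by simp)
  have hy := hS y (by simp)
  have hz := hS z (by simp)
  obtain ⟨i, hi⟩ := hx.1
  obtain ⟨j, hj⟩ := hy.1
  obtain ⟨l, hl⟩ := hz.1
  refine ⟨cnt M x, cnt M y, cnt M z, ?_, hM.cnt_le hα hx.1 hx.2,
    hM.cnt_le (q := 5) hα hy.1 (by omega), hM.cnt_le (q := 7) hα hz.1 (by omega)⟩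
  rw [Finset.sum_insert (by simp; omega), Finset.sum_pair hyz.ne]; ring

theorem prod_pair_ge {B : Finset ℕ} (hB : ∀ p ∈ B, Odd p ∧ 3 ≤ p) (h : B.card = 2) :
    Odd (∏ p ∈ B, p) ∧ 15 ≤ ∏ p ∈ B, p := by
  obtain ⟨x, y, hxy, rfl⟩ := exists_lt_of_card_two h
  have hx := hB x (by simp)
  have hy := hB y (by simp)
  rw [Finset.prod_pair hxy.ne]
  refine ⟨hx.1.mul hy.1, ?_⟩
  obtain ⟨i, hi⟩ := hx.1
  obtain ⟨j, hj⟩ := hy.1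
  calc 15 = 3 * 5 := rfl
    _ ≤ x * y := Nat.mul_le_mul hx.2 (by omega)

theorem prod_triple_ge {B : Finset ℕ} (hB : ∀ p ∈ B, Odd p ∧ 3 ≤ p) (h : B.card = 3) :
    Odd (∏ p ∈ B, p) ∧ 105 ≤ ∏ p ∈ B, p := by
  obtain ⟨x, y, z, hxy, hyz, rfl⟩ := exists_lt_of_card_three h
  have hx := hB x (by simp)
  have hy := hB y (by simp)
  have hz := hB z (by simp)
  rw [Finset.prod_insert (by simp; omega), Finset.prod_pair hyz.ne]
  refine ⟨hx.1.mul (hy.1.mul hz.1), ?_⟩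
  obtain ⟨i, hi⟩ := hx.1
  obtain ⟨j, hj⟩ := hy.1
  obtain ⟨l, hl⟩ := hz.1
  calc 105 = 3 * (5 * 7) := rfl
    _ ≤ x * (y * z) := Nat.mul_le_mul hx.2 (Nat.mul_le_mul (by omega) (by omega))

theorem tailCount_mono {Q Q' : Finset ℕ} (h : Q ⊆ Q') (t : ℕ) :
    tailCount M Q t ≤ tailCount M Q' t := by
  refine Finset.card_le_card fun m hm => ?_
  rw [Finset.mem_filter] at hm ⊢
  exact ⟨hm.1, hm.2.trans (Finset.card_le_card (Finset.filter_subset_filter _ h))⟩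

/-- The elements `m` of `M` whose set of divisors in `P` belongs to `U`. -/
def hits (M P : Finset ℕ) (U : Finset (Finset ℕ)) : Finset ℕ :=
  M.filter (fun m => P.filter (fun p => p ∣ m) ∈ U)

theorem card_hits_le {U : Finset (Finset ℕ)} (hP : ∀ p ∈ P, p.Prime ∧ p ≠ 2) (S : Finset ℕ)
    (E : Finset (Finset ℕ)) (Q : Finset ℕ) (t : ℕ)
    (h : ∀ m, P.filter (fun p => p ∣ m) ∈ U → (∃ p ∈ S, p ∣ m) ∨
      (∃ B ∈ E, B ⊆ P.filter (fun p => p ∣ m)) ∨ t ≤ (Q.filter (fun p => p ∣ m)).card) :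
    (hits M P U).card ≤ ∑ p ∈ S, cnt M p + ∑ B ∈ E, cnt M (∏ p ∈ B, p) + tailCount M Q t := by
  have hsub : hits M P U ⊆ (S.biUnion (fun p => M.filter (fun m => p ∣ m)) ∪
      E.biUnion (fun B => M.filter (fun m => (∏ p ∈ B, p) ∣ m))) ∪
      M.filter (fun m => t ≤ (Q.filter (fun p => p ∣ m)).card) := by
    intro m hm
    rw [hits, Finset.mem_filter] at hm
    simp only [Finset.mem_union, Finset.mem_biUnion, Finset.mem_filter]
    rcases h m hm.2 with ⟨p, hp, hpm⟩ | ⟨B, hB, hBm⟩ | h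
    · exact Or.inl (Or.inl ⟨p, hp, hm.1, hpm⟩)
    · refine Or.inl (Or.inr ⟨B, hB, hm.1, ?_⟩)
      exact Finset.prod_primes_dvd m
        (fun p hp => (hP p (Finset.mem_of_mem_filter p (hBm hp))).1.prime)
        (fun p hp => (Finset.mem_filter.1 (hBm hp)).2)
    · exact Or.inr ⟨hm.1, h⟩
  refine (Finset.card_le_card hsub).trans ((Finset.card_union_le _ _).trans ?_)
  refine Nat.add_le_add_right ((Finset.card_union_le _ _).trans ?_) _
  exact Nat.add_le_add Finset.card_biUnion_le Finset.card_biUnion_le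

/-- For `2 ^ k ≥ 512` the comparisons below hold with room for the rounding errors; the smaller powers
are treated one at a time. For `k = 3` some comparisons also use that there are few pairs. -/
theorem two_pow_cases (k : ℕ) : 2 ^ k = 1 ∨ 2 ^ k = 2 ∨ 2 ^ k = 4 ∨ (2 ^ k = 8 ∧ k = 3) ∨
    2 ^ k = 16 ∨ 2 ^ k = 32 ∨ 2 ^ k = 64 ∨ 2 ^ k = 128 ∨ 2 ^ k = 256 ∨ 512 ≤ 2 ^ k := by
  by_cases h : k < 9
  · interval_cases k <;> simp
  · have : 2 ^ 9 ≤ 2 ^ k := Nat.pow_le_pow_right (by norm_num) (by omega)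
    omega

/-- The case in which `U` contains no set of size at most two. If `t` is the least size in `U`, then
`#U ≥ 2 ^ (k - t)`, which suffices for `t ≥ 4`. For `t = 3`, either there are two triples, or the
multiples of the only one are counted separately. -/
theorem card_hits_le_of_card_ge_three {U : Finset (Finset ℕ)} (hM : EvenlySpread M (2 ^ k) α)
    (hα : α < 2) (hP : ∀ p ∈ P, p.Prime ∧ p ≠ 2) (hPk : P.card = k) (hk : k ≤ 44)
    (hUP : U ⊆ P.powerset) (hup : ∀ A ∈ U, ∀ B ⊆ P, A ⊆ B → B ∈ U)
    (h3 : ∀ A ∈ U, 3 ≤ A.card) : (hits M P U).card ≤ U.card := by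
  rcases U.eq_empty_or_nonempty with rfl | hne
  · simp [hits]
  obtain ⟨A, hA, hmin⟩ := Finset.exists_min_image U Finset.card hne
  have hAP := Finset.mem_powerset.1 (hUP hA)
  have hA3 := h3 A hA
  have hcl : A.card ≤ 44 := (Finset.card_le_card hAP).trans (by omega)
  have hlow := card_upper_ge_of_mem hUP hup hA
  have hf : (hits M P U).card ≤ tailCount M P A.card := by
    have := card_hits_le (M := M) hP ∅ ∅ P A.card (fun m hm => Or.inr (Or.inr (hmin _ hm)))
    simpa using this
  rw [hPk] at hlow
  have hPo : ∀ p ∈ P, Odd p ∧ 3 ≤ p := fun p hp => prime_odd (hP p hp)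
  rcases (by omega : A.card = 3 ∨ A.card = 4 ∨ A.card = 5 ∨ 6 ≤ A.card) with h | h | h | h
  · by_cases hB : ∃ B ∈ U, B.card = 3 ∧ A ≠ B
    · obtain ⟨B, hBU, hB3, hAB⟩ := hB
      have h1 := card_upper_ge_of_two_triples hUP hup hA hBU h hB3 hAB
      have h2 := tailCount_le_of_ok hM hα hP hPk hk (by norm_num)
        (check_three k (by omega) α hα)
      rw [h] at hf
      rw [hPk] at h1
      omega
    · have h1 := card_hits_le (M := M) (U := U) hP ∅ {A} P 4 (fun m hm => by
        by_cases h4 : 4 ≤ (P.filter (fun p => p ∣ m)).card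
        · exact Or.inr (Or.inr h4)
        · refine Or.inr (Or.inl ⟨A, by simp, ?_⟩)
          have h3' := h3 _ hm
          have : A = P.filter (fun p => p ∣ m) := by
            by_contra hne
            exact hB ⟨_, hm, by omega, hne⟩
          rw [← this])
      have h2 := tailCount_le_of_ok hM hα hP hPk hk (by norm_num)
        (check_four k (by omega) α hα)
      obtain ⟨hodd, h105⟩ := prod_triple_ge (fun p hp => hPo p (hAP hp)) h
      have h4 := hM.cnt_le hα hodd h105
      simp only [Finset.sum_empty, Finset.sum_singleton] at h1
      rw [h] at hlow
      have := two_pow_cases k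
      generalize 2 ^ k = N at *
      omega
  · have h2 := tailCount_le_of_ok hM hα hP hPk hk (by norm_num) (check_four k (by omega) α hα)
    rw [h] at hf hlow
    omega
  · have h2 := tailCount_le_of_ok hM hα hP hPk hk (by norm_num) (check_five k (by omega) α hα)
    rw [h] at hf hlow
    omega
  · have h2 := two_pow_mul_tailCount_le hM hP hPk hk h (by omega)
    have h3 : 2 ^ A.card * (hits M P U).card ≤ 2 ^ A.card * U.card :=
      (Nat.mul_le_mul_left _ hf).trans (h2.trans hlow)
    exact Nat.le_of_mul_le_mul_left h3 (by positivity)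

theorem hall_inequality {U : Finset (Finset ℕ)} (hM : EvenlySpread M (2 ^ k) α)
    (hα : α < 2) (hP : ∀ p ∈ P, p.Prime ∧ p ≠ 2) (hPk : P.card = k) (hk : k ≤ 44)
    (hUP : U ⊆ P.powerset) (hup : ∀ A ∈ U, ∀ B ⊆ P, A ⊆ B → B ∈ U) :
    (hits M P U).card ≤ U.card := by
  by_cases h0 : ∅ ∈ U
  · have h1 := card_upper_ge_of_mem hUP hup h0
    have h2 : (hits M P U).card ≤ M.card := Finset.card_filter_le _ _
    rw [hM.card_eq] at h2
    simp only [Finset.card_empty, pow_zero, one_mul, hPk] at h1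
    omega
  have hPo : ∀ p ∈ P, Odd p ∧ 3 ≤ p := fun p hp => prime_odd (hP p hp)
  set S := P.filter (fun p => {p} ∈ U) with hS
  set E := (P \ S).powersetCard 2 ∩ U with hE
  have hSP : S ⊆ P := Finset.filter_subset _ _
  have hSo : ∀ p ∈ S, Odd p ∧ 3 ≤ p := fun p hp => hPo p (hSP hp)
  have hE' : ∀ B ∈ E, B ∈ U ∧ B ⊆ P \ S ∧ B.card = 2 := by
    intro B hB
    rw [hE, Finset.mem_inter, Finset.mem_powersetCard] at hB
    exact ⟨hB.2, hB.1⟩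
  -- in the case distinction at the end, `low s e` reads `(1 - (1 + 2 ^ (-e)) / 2 ^ (s + 1)) * 2 ^ k ≤ #U`
  have low : ∀ s e a b : ℕ, s ≤ S.card → e ≤ E.card → 2 ^ (s + e + 1) = a → 2 ^ e + 1 = b →
      a * 2 ^ k ≤ a * U.card + 2 ^ k * b := by
    intro s e a b hs he ha hb
    have := card_upper_ge hUP hup hSP (fun p hp => (Finset.mem_filter.1 hp).2) hE' hs he
    rwa [hPk, ha, hb] at this
  -- `S` holds all singletons of `U`, so a member of `U` disjoint from `S` has at least two elements
  have hcov : ∀ m, P.filter (fun p => p ∣ m) ∈ U → (∃ p ∈ S, p ∣ m) ∨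
      ((P \ S).filter (fun p => p ∣ m) = P.filter (fun p => p ∣ m) ∧
        2 ≤ (P.filter (fun p => p ∣ m)).card) := by
    intro m hm
    by_cases h : ∃ p ∈ S, p ∣ m
    · exact Or.inl h
    · right
      push Not at h
      have heq : (P \ S).filter (fun p => p ∣ m) = P.filter (fun p => p ∣ m) := by
        ext p
        simp only [Finset.mem_filter, Finset.mem_sdiff]
        constructor
        · rintro ⟨⟨h1, _⟩, h2⟩; exact ⟨h1, h2⟩
        · rintro ⟨h1, h2⟩; exact ⟨⟨h1, fun h3 => h p h3 h2⟩, h2⟩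
      refine ⟨heq, ?_⟩
      by_contra hlt
      rcases (by omega : (P.filter (fun p => p ∣ m)).card = 0 ∨
        (P.filter (fun p => p ∣ m)).card = 1) with h1 | h1
      · rw [Finset.card_eq_zero] at h1
        exact h0 (h1 ▸ hm)
      · obtain ⟨p, hp⟩ := Finset.card_eq_one.1 h1
        have hpm : p ∈ P.filter (fun p => p ∣ m) := by rw [hp]; simp
        rw [Finset.mem_filter] at hpm
        exact h p (Finset.mem_filter.2 ⟨hpm.1, hp ▸ hm⟩) hpm.2
  have f1 : (hits M P U).card ≤ tailCount M P 1 := by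
    have := card_hits_le (M := M) (U := U) hP ∅ ∅ P 1 (fun m hm => Or.inr (Or.inr (by
      rw [Nat.one_le_iff_ne_zero, Ne, Finset.card_eq_zero]
      intro h; exact h0 (h ▸ hm))))
    simpa using this
  have f2 : (hits M P U).card ≤ ∑ p ∈ S, cnt M p + tailCount M (P \ S) 2 := by
    have := card_hits_le (M := M) (U := U) hP S ∅ (P \ S) 2 (fun m hm => by
      rcases hcov m hm with h | ⟨h1, h2⟩
      · exact Or.inl h
      · exact Or.inr (Or.inr (h1 ▸ h2)))
    simpa using this
  have f3 : (hits M P U).card ≤ ∑ p ∈ S, cnt M p + ∑ B ∈ E, cnt M (∏ p ∈ B, p) +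
      tailCount M (P \ S) 3 :=
    card_hits_le (M := M) (U := U) hP S E (P \ S) 3 (fun m hm => by
      rcases hcov m hm with h | ⟨h1, h2⟩
      · exact Or.inl h
      · right
        by_cases h3 : 3 ≤ (P.filter (fun p => p ∣ m)).card
        · exact Or.inr (h1 ▸ h3)
        · refine Or.inl ⟨_, ?_, subset_rfl⟩
          rw [hE, Finset.mem_inter, Finset.mem_powersetCard]
          exact ⟨⟨h1 ▸ Finset.filter_subset _ _, by omega⟩, hm⟩)
  have sumE : ∑ B ∈ E, cnt M (∏ p ∈ B, p) ≤ E.card * ((2 * 2 ^ k + 15) / 30) := by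
    rw [← smul_eq_mul]
    refine Finset.sum_le_card_nsmul _ _ _ fun B hB => ?_
    obtain ⟨_, hBP, hB2⟩ := hE' B hB
    obtain ⟨h1, h2⟩ := prod_pair_ge (fun p hp => hPo p (Finset.sdiff_subset (hBP hp))) hB2
    have := hM.cnt_le hα h1 h2
    omega
  have a1 := tailCount_le_of_ok hM hα hP hPk hk (by norm_num) (check_one k (by omega) α hα)
  have a2 := tailCount_le_of_ok hM hα hP hPk hk (by norm_num) (check_two k (by omega) α hα)
  have a3 := tailCount_le_of_ok hM hα hP hPk hk (by norm_num) (check_three k (by omega) α hα)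
  have m2 := tailCount_mono (M := M) (Finset.sdiff_subset (s := P) (t := S)) 2
  have m3 := tailCount_mono (M := M) (Finset.sdiff_subset (s := P) (t := S)) 3
  -- either 3 is removed, which improves the tail bounds, or all primes of `S` are at least 5
  have h35 : (tailCount M (P \ S) 2 ≤ 308 * 2 ^ k / 1000 ∧
      tailCount M (P \ S) 3 ≤ 150 * 2 ^ k / 1000) ∨ ∀ p ∈ S, Odd p ∧ 5 ≤ p := by
    by_cases h3 : 3 ∈ S
    · left
      have hsub : P \ S ⊆ P.erase 3 := fun p hp => by
        rw [Finset.mem_sdiff] at hp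
        exact Finset.mem_erase.2 ⟨fun h => hp.2 (h ▸ h3), hp.1⟩
      exact ⟨(tailCount_mono hsub 2).trans (tailCount_erase_le_of_ok hM hα hP hPk hk (hSP h3)
          (by norm_num) (check_two_erase k (by omega) α hα)),
        (tailCount_mono hsub 3).trans (tailCount_erase_le_of_ok hM hα hP hPk hk (hSP h3)
          (by norm_num) (check_three_erase k (by omega) α hα))⟩
    · right
      intro p hp
      obtain ⟨⟨i, hi⟩, h⟩ := hSo p hp
      have : p ≠ 3 := fun h => h3 (h ▸ hp)
      exact ⟨⟨i, hi⟩, by omega⟩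
  have hEk : E.card ≤ (k - S.card).choose 2 := by
    refine (Finset.card_le_card Finset.inter_subset_left).trans ?_
    rw [Finset.card_powersetCard, Finset.card_sdiff_of_subset hSP, hPk]
  have hk8 := two_pow_cases k
  rcases (by omega : 4 ≤ S.card ∨ S.card = 3 ∨ S.card = 2 ∨ S.card = 1 ∨ S.card = 0) with
    hs | hs | hs | hs | hs
  · have l := low 4 0 32 2 hs (by omega) rfl rfl
    clear hEk sumE
    generalize 2 ^ k = N at *
    omega
  · rcases Nat.eq_zero_or_pos E.card with he | he
    · have l := low 3 0 16 2 (by omega) (by omega) rfl rfl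
      obtain ⟨u, v, w, hsum, hu, hv, hw⟩ := sum_cnt_three hM hα hSo hs
      rw [he] at sumE
      clear hEk low
      generalize 2 ^ k = N at *
      omega
    · have l := low 3 1 32 3 (by omega) (by omega) rfl rfl
      clear hEk sumE
      generalize 2 ^ k = N at *
      omega
  · obtain ⟨u, v, hsum, hu, hv⟩ := sum_cnt_two hM hα (by decide) hSo hs
    have hk3 : k = 3 → E.card = 0 := by
      rintro rfl
      rw [hs] at hEk
      simpa using hEk
    rcases (by omega : E.card = 0 ∨ E.card = 1 ∨ 2 ≤ E.card) with he | he | he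
    · have l := low 2 0 8 2 (by omega) (by omega) rfl rfl
      rw [he] at sumE
      clear hEk low
      generalize 2 ^ k = N at *
      omega
    · have l := low 2 1 16 3 (by omega) (by omega) rfl rfl
      rw [he] at sumE
      clear hEk low
      generalize 2 ^ k = N at *
      omega
    · have l := low 2 2 32 5 (by omega) (by omega) rfl rfl
      rcases h35 with h35 | h35
      · clear hEk sumE low
        generalize 2 ^ k = N at *
        omega
      · obtain ⟨u', v', hsum', hu', hv'⟩ := sum_cnt_two hM hα (by decide) h35 hs
        clear hEk sumE low
        generalize 2 ^ k = N at *
        omega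
  · have hsum := sum_cnt_one hM hα hSo hs
    rcases (by omega : E.card = 0 ∨ E.card = 1 ∨ 2 ≤ E.card) with he | he | he
    · have l := low 1 0 4 2 (by omega) (by omega) rfl rfl
      rw [he] at sumE
      rcases h35 with h35 | h35
      · clear hEk low
        generalize 2 ^ k = N at *
        omega
      · have hsum' := sum_cnt_one hM hα h35 hs
        clear hEk low
        generalize 2 ^ k = N at *
        omega
    · have l := low 1 1 8 3 (by omega) (by omega) rfl rfl
      rw [he] at sumE
      clear hEk low
      generalize 2 ^ k = N at *
      omega
    · have l := low 1 2 16 5 (by omega) (by omega) rfl rfl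
      rcases h35 with h35 | h35
      · clear hEk sumE low
        generalize 2 ^ k = N at *
        omega
      · have hsum' := sum_cnt_one hM hα h35 hs
        clear hEk sumE low
        generalize 2 ^ k = N at *
        omega
  · have hsum : ∑ p ∈ S, cnt M p = 0 := by
      rw [Finset.card_eq_zero.1 hs]; simp
    have hk3 : k = 3 → E.card ≤ 3 := by
      rintro rfl
      rw [hs] at hEk
      simpa using hEk
    rcases (by omega : E.card = 0 ∨ E.card = 1 ∨ E.card = 2 ∨ E.card = 3 ∨ E.card = 4 ∨
      5 ≤ E.card) with he | he | he | he | he | he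
    · refine card_hits_le_of_card_ge_three hM hα hP hPk hk hUP hup fun A hA => ?_
      by_contra hlt
      have hAP := Finset.mem_powerset.1 (hUP hA)
      rcases (by omega : A.card = 0 ∨ A.card = 1 ∨ A.card = 2) with h | h | h
      · rw [Finset.card_eq_zero] at h
        exact h0 (h ▸ hA)
      · obtain ⟨p, rfl⟩ := Finset.card_eq_one.1 h
        have : p ∈ S := Finset.mem_filter.2 ⟨by simpa using hAP, hA⟩
        rw [Finset.card_eq_zero.1 hs] at this
        simp at this
      · have : A ∈ E := by
          rw [hE, Finset.mem_inter, Finset.mem_powersetCard, Finset.card_eq_zero.1 hs,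
            Finset.sdiff_empty]
          exact ⟨⟨hAP, h⟩, hA⟩
        rw [Finset.card_eq_zero.1 he] at this
        simp at this
    · have l := low 0 1 4 3 (by omega) (by omega) rfl rfl
      rw [he] at sumE
      clear hEk low
      generalize 2 ^ k = N at *
      omega
    · have l := low 0 2 8 5 (by omega) (by omega) rfl rfl
      rw [he] at sumE
      clear hEk low
      generalize 2 ^ k = N at *
      omega
    · have l := low 0 3 16 9 (by omega) (by omega) rfl rfl
      rw [he] at sumE
      clear hEk low
      generalize 2 ^ k = N at *
      omega
    · have l := low 0 4 32 17 (by omega) (by omega) rfl rfl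
      rw [he] at sumE
      clear hEk low
      generalize 2 ^ k = N at *
      omega
    · have l := low 0 5 64 33 (by omega) (by omega) rfl rfl
      clear hEk sumE low
      generalize 2 ^ k = N at *
      omega

end

/-! ### The matching -/

section
variable {M P : Finset ℕ} {k α : ℕ}

theorem exists_superset_bijection (hM : EvenlySpread M (2 ^ k) α) (hα : α < 2)
    (hP : ∀ p ∈ P, p.Prime ∧ p ≠ 2) (hPk : P.card = k) (hk : k ≤ 44) :
    ∃ φ : ℕ → Finset ℕ, Set.BijOn φ M P.powerset ∧
      ∀ m ∈ M, P.filter (fun p => p ∣ m) ⊆ φ m := by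
  obtain ⟨f, hinj, hf⟩ := (Finset.all_card_le_biUnion_card_iff_exists_injective
    (fun m : M => P.powerset.filter (fun A => P.filter (fun p => p ∣ (m : ℕ)) ⊆ A))).1 (by
      intro s
      set U := s.biUnion
        (fun m : M => P.powerset.filter (fun A => P.filter (fun p => p ∣ (m : ℕ)) ⊆ A)) with hU
      have hall := hall_inequality (U := U) hM hα hP hPk hk
        (by
          intro A hA
          simp only [hU, Finset.mem_biUnion, Finset.mem_filter] at hA
          obtain ⟨_, _, hA, _⟩ := hA
          exact hA)
        (by
          intro A hA B hB hAB
          simp only [hU, Finset.mem_biUnion, Finset.mem_filter, Finset.mem_powerset] at hA ⊢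
          obtain ⟨m, hm, _, hmA⟩ := hA
          exact ⟨m, hm, hB, hmA.trans hAB⟩)
      have hs : s.map (Function.Embedding.subtype _) ⊆ hits M P U := by
        intro m hm
        rw [Finset.mem_map] at hm
        obtain ⟨x, hx, rfl⟩ := hm
        rw [hits, Finset.mem_filter]
        refine ⟨x.2, ?_⟩
        rw [hU, Finset.mem_biUnion]
        exact ⟨x, hx, Finset.mem_filter.2
          ⟨Finset.mem_powerset.2 (Finset.filter_subset _ _), subset_rfl⟩⟩
      calc s.card = (s.map (Function.Embedding.subtype _)).card := (Finset.card_map _).symm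
        _ ≤ _ := Finset.card_le_card hs
        _ ≤ _ := hall)
  refine ⟨fun m => if h : m ∈ M then f ⟨m, h⟩ else ∅, ?_, ?_⟩
  · have hmaps : Set.MapsTo (fun m => if h : m ∈ M then f ⟨m, h⟩ else ∅) M P.powerset := by
      intro m hm
      have hm : m ∈ M := hm
      simp only [hm, dif_pos]
      exact Finset.mem_of_mem_filter _ (hf ⟨m, hm⟩)
    have hinj' : Set.InjOn (fun m => if h : m ∈ M then f ⟨m, h⟩ else ∅) (M : Set ℕ) := by
      intro m hm m' hm' h
      have hm : m ∈ M := hm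
      have hm' : m' ∈ M := hm'
      simp only [hm, hm', dif_pos] at h
      exact congrArg Subtype.val (hinj h)
    exact ⟨hmaps, hinj', Finset.surjOn_of_injOn_of_card_le _ hmaps hinj'
      (by rw [Finset.card_powerset, hPk, hM.card_eq])⟩
  · intro m hm
    simp only [hm, dif_pos]
    exact (Finset.mem_filter.1 (hf ⟨m, hm⟩)).2

/-- With `φ` as in `exists_superset_bijection`, the divisor matched with `m` is the product of the
primes outside `φ m`. -/
theorem exists_coprime_bijection {Q : ℕ} (hQ : Squarefree Q) (hodd : Odd Q)
    (hQk : Q.primeFactors.card = k) (hk : k ≤ 44) (hM : EvenlySpread M (2 ^ k) α) (hα : α < 2) :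
    ∃ ψ : ℕ → ℕ, Set.BijOn ψ Q.divisors M ∧ ∀ d ∈ Q.divisors, Nat.Coprime d (ψ d) := by
  have hP : ∀ p ∈ Q.primeFactors, p.Prime ∧ p ≠ 2 := fun p hp => by
    refine ⟨Nat.prime_of_mem_primeFactors hp, ?_⟩
    rintro rfl
    exact (Nat.not_even_iff_odd.2 hodd) (even_iff_two_dvd.2 (Nat.dvd_of_mem_primeFactors hp))
  obtain ⟨φ, hφ, hφM⟩ := exists_superset_bijection hM hα hP hQk hk
  set χ : ℕ → ℕ := fun m => ∏ p ∈ Q.primeFactors \ φ m, p with hχ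
  have hpr : ∀ m, ∀ p ∈ Q.primeFactors \ φ m, p.Prime := fun m p hp =>
    (hP p (Finset.sdiff_subset hp)).1
  have hcop : ∀ m ∈ M, Nat.Coprime (χ m) m := by
    intro m hm
    refine Nat.Coprime.prod_left fun p hp => ?_
    rw [(hpr m p hp).coprime_iff_not_dvd]
    intro hpm
    rw [Finset.mem_sdiff] at hp
    exact hp.2 (hφM m hm (Finset.mem_filter.2 ⟨hp.1, hpm⟩))
  have hbij : Set.BijOn χ M Q.divisors := by
    refine ⟨?_, ?_, ?_⟩
    · intro m _
      rw [Finset.mem_coe, Nat.mem_divisors]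
      refine ⟨?_, hQ.ne_zero⟩
      refine (Finset.prod_dvd_prod_of_subset _ _ _ Finset.sdiff_subset).trans ?_
      exact Nat.prod_primeFactors_dvd Q
    · intro m hm m' hm' h
      have h1 : Q.primeFactors \ φ m = Q.primeFactors \ φ m' := by
        rw [← Nat.primeFactors_prod (hpr m), ← Nat.primeFactors_prod (hpr m')]
        exact congrArg _ h
      have hsub : ∀ m ∈ M, φ m ⊆ Q.primeFactors := fun m hm =>
        Finset.mem_powerset.1 (hφ.mapsTo hm)
      refine hφ.injOn hm hm' ?_
      rw [← Finset.sdiff_sdiff_eq_self (hsub m hm), h1, Finset.sdiff_sdiff_eq_self (hsub m' hm')]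
    · intro d hd
      rw [Finset.mem_coe, Nat.mem_divisors] at hd
      obtain ⟨m, hm, hmd⟩ := hφ.surjOn
        (Finset.mem_coe.2 (Finset.mem_powerset.2
          (Finset.sdiff_subset (s := Q.primeFactors) (t := d.primeFactors))))
      refine ⟨m, hm, ?_⟩
      simp only [hχ, hmd]
      rw [Finset.sdiff_sdiff_eq_self (Nat.primeFactors_mono hd.1 hd.2)]
      exact Nat.prod_primeFactors_of_squarefree (hQ.squarefree_of_dvd hd.1)
  have hinv := hbij.invOn_invFunOn
  have hbij' := hbij.symm hinv.symm
  refine ⟨Function.invFunOn χ M, hbij', fun d hd => ?_⟩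
  have h1 := hcop _ (hbij'.mapsTo hd)
  have h2 : χ (Function.invFunOn χ M d) = d := hinv.2 hd
  rwa [h2] at h1

end

theorem evenlySpread_Icc (N : ℕ) : EvenlySpread (Finset.Icc 1 N) N 0 := by
  have hc : ∀ d, cnt (Finset.Icc 1 N) d = N / d := fun d =>
    Nat.Ioc_filter_dvd_card_eq_div N d
  refine ⟨by simp, fun d _ => ?_, fun d hd => ?_, fun d _ => ?_⟩ <;> rw [hc]
  · have := Nat.mul_div_le N d
    omega
  · have := Nat.lt_mul_div_succ N hd.pos
    rw [Nat.mul_add] at this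
    omega
  · have := Nat.mul_div_le N d
    omega

/-- An odd `d` has `q = 2 * N / d` multiples up to `2 * N`, of which `q / 2` are even. -/
theorem evenlySpread_odd (N : ℕ) :
    EvenlySpread ((Finset.Icc 1 (2 * N)).filter (fun m => Odd m)) N 1 := by
  have hc : ∀ d, Odd d → cnt ((Finset.Icc 1 (2 * N)).filter (fun m => Odd m)) d +
      (2 * N / d) / 2 = 2 * N / d := by
    intro d hd
    have h1 : ((Finset.Icc 1 (2 * N)).filter (fun m => d ∣ m)).card = 2 * N / d :=
      Nat.Ioc_filter_dvd_card_eq_div (2 * N) d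
    have h2 : ((Finset.Icc 1 (2 * N)).filter (fun m => d * 2 ∣ m)).card = 2 * N / (d * 2) :=
      Nat.Ioc_filter_dvd_card_eq_div (2 * N) (d * 2)
    have h3 := Finset.card_filter_add_card_filter_not
      (s := (Finset.Icc 1 (2 * N)).filter (fun m => d ∣ m)) (fun m => Odd m)
    rw [Nat.div_div_eq_div_mul, ← h2, ← h1, ← h3, cnt, Finset.filter_filter, Finset.filter_filter,
      Finset.filter_filter]
    congr 2
    · ext m; simp only [Finset.mem_filter]; tauto
    · ext m
      simp only [Finset.mem_filter, Nat.not_odd_iff_even, even_iff_two_dvd]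
      refine and_congr_right fun _ => ⟨fun h => ⟨?_, ?_⟩, fun h => ?_⟩
      · exact (Dvd.intro _ rfl).trans h
      · exact (Dvd.intro_left _ rfl).trans h
      · exact (Nat.coprime_two_right.2 hd).mul_dvd_of_dvd_of_dvd h.1 h.2
  have hcard : ((Finset.Icc 1 (2 * N)).filter (fun m => Odd m)).card = N := by
    have := hc 1 odd_one
    simp only [cnt, isUnit_one, IsUnit.dvd, Finset.filter_true, Nat.div_one] at this
    omega
  refine ⟨hcard, fun d hd => ?_, fun d hd => ?_, fun d hd => ?_⟩ <;>
    have h := hc d hd <;>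
    have h1 := Nat.mul_div_le (2 * N) d <;>
    have h2 := Nat.lt_mul_div_succ (2 * N) hd.pos <;>
    generalize 2 * N / d = q at * <;>
    generalize cnt _ d = c at *
  · have : d * (2 * c) ≤ d * (q + 1) := Nat.mul_le_mul_left _ (by omega)
    nlinarith
  · have : d * q ≤ d * (2 * c) := Nat.mul_le_mul_left _ (by omega)
    nlinarith
  · have : d * c ≤ d * q := Nat.mul_le_mul_left _ (by omega)
    omega

/-- The number of divisors of `n` need not be computed in advance: a bijection determines it. -/
theorem matchable_of_bijOn {n T : ℕ} {ψ : ℕ → ℕ}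
    (h : Set.BijOn ψ n.divisors (Finset.Icc 1 T))
    (hc : ∀ d ∈ n.divisors, Nat.Coprime d (ψ d)) : Matchable n := by
  have hT : n.divisors.card = T := by
    have h1 : n.divisors.image ψ = Finset.Icc 1 T := by
      rw [← Finset.coe_inj, Finset.coe_image]; exact h.image_eq
    rw [← Finset.card_image_of_injOn h.injOn, h1]; simp
  exact ⟨ψ, by rw [hT]; exact h, hc⟩

theorem stmt_7 (n : ℕ) (hn : 0 < n) (hsf : Squarefree n)
    (hω : n.primeFactors.card ≤ 44) : Matchable n := by
  rcases Nat.even_or_odd n with heven | hodd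
  · obtain ⟨Q, rfl⟩ := even_iff_two_dvd.1 heven
    have hcop : Nat.Coprime 2 Q := Nat.coprime_of_squarefree_mul hsf
    have hQodd : Odd Q := Nat.coprime_two_left.1 hcop
    have hQ : Squarefree Q := hsf.squarefree_of_dvd (Dvd.intro_left _ rfl)
    have hk : Q.primeFactors.card ≤ 44 :=
      (Finset.card_le_card (Nat.primeFactors_mono (Dvd.intro_left _ rfl) hn.ne')).trans hω
    set N := 2 ^ Q.primeFactors.card with hN
    obtain ⟨ψ₀, hψ₀, hc₀⟩ := exists_coprime_bijection hQ hQodd rfl hk (evenlySpread_Icc N)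
      (by norm_num)
    obtain ⟨ψ₁, hψ₁, hc₁⟩ := exists_coprime_bijection hQ hQodd rfl hk (evenlySpread_odd N)
      (by norm_num)
    have hdiv_odd : ∀ d ∈ (2 * Q).divisors, Odd d → d ∈ Q.divisors := by
      intro d hd ho
      rw [Nat.mem_divisors] at hd ⊢
      exact ⟨(Nat.coprime_two_right.2 ho).dvd_of_dvd_mul_left hd.1, hQ.ne_zero⟩
    have hdiv_even : ∀ d ∈ (2 * Q).divisors, ¬ Odd d → ∃ c ∈ Q.divisors, d = 2 * c := by
      intro d hd ho
      rw [Nat.not_odd_iff_even, even_iff_two_dvd] at ho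
      obtain ⟨c, rfl⟩ := ho
      rw [Nat.mem_divisors] at hd
      exact ⟨c, Nat.mem_divisors.2 ⟨Nat.dvd_of_mul_dvd_mul_left (by norm_num) hd.1, hQ.ne_zero⟩, rfl⟩
    have hodd_of : ∀ d ∈ Q.divisors, Odd d := fun d hd =>
      Odd.of_dvd_nat hQodd (Nat.dvd_of_mem_divisors hd)
    have hm₀ : ∀ d ∈ Q.divisors, 1 ≤ ψ₀ d ∧ ψ₀ d ≤ N := fun d hd => by
      simpa using hψ₀.mapsTo hd
    have hm₁ : ∀ d ∈ Q.divisors, (1 ≤ ψ₁ d ∧ ψ₁ d ≤ 2 * N) ∧ Odd (ψ₁ d) := fun d hd => by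
      simpa using hψ₁.mapsTo hd
    -- odd divisors go to even numbers, even divisors to odd numbers
    set ψ : ℕ → ℕ := fun d => if Odd d then 2 * ψ₀ d else ψ₁ (d / 2) with hψ
    have hψo : ∀ d, Odd d → ψ d = 2 * ψ₀ d := fun d hd => by simp [hψ, hd]
    have hψe : ∀ c, ψ (2 * c) = ψ₁ c := fun c => by simp [hψ]
    refine matchable_of_bijOn (T := 2 * N) (ψ := ψ) ⟨?_, ?_, ?_⟩ ?_
    · intro d hd
      rw [Finset.coe_Icc, Set.mem_Icc]
      by_cases ho : Odd d
      · have := hm₀ d (hdiv_odd d hd ho)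
        rw [hψo d ho]; omega
      · obtain ⟨c, hc, rfl⟩ := hdiv_even d hd ho
        rw [hψe]; exact (hm₁ c hc).1
    · intro d hd d' hd' h
      by_cases ho : Odd d <;> by_cases ho' : Odd d'
      · rw [hψo d ho, hψo d' ho'] at h
        exact hψ₀.injOn (hdiv_odd d hd ho) (hdiv_odd d' hd' ho') (by omega)
      · obtain ⟨c, hc, rfl⟩ := hdiv_even d' hd' ho'
        rw [hψo d ho, hψe] at h
        obtain ⟨i, hi⟩ := (hm₁ c hc).2
        omega
      · obtain ⟨c, hc, rfl⟩ := hdiv_even d hd ho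
        rw [hψo d' ho', hψe] at h
        obtain ⟨i, hi⟩ := (hm₁ c hc).2
        omega
      · obtain ⟨c, hc, rfl⟩ := hdiv_even d hd ho
        obtain ⟨c', hc', rfl⟩ := hdiv_even d' hd' ho'
        rw [hψe, hψe] at h
        rw [hψ₁.injOn hc hc' h]
    · intro m hm
      rw [Finset.coe_Icc, Set.mem_Icc] at hm
      rcases Nat.even_or_odd' m with ⟨j, rfl | rfl⟩
      · obtain ⟨d, hd, hdj⟩ := hψ₀.surjOn
          (show j ∈ (Finset.Icc 1 N : Set ℕ) by rw [Finset.coe_Icc, Set.mem_Icc]; omega)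
        refine ⟨d, ?_, by rw [hψo d (hodd_of d hd), hdj]⟩
        rw [Finset.mem_coe, Nat.mem_divisors]
        exact ⟨(Nat.dvd_of_mem_divisors hd).mul_left 2, hn.ne'⟩
      · obtain ⟨d, hd, hdj⟩ := hψ₁.surjOn
          (show 2 * j + 1 ∈ ((Finset.Icc 1 (2 * N)).filter (fun m => Odd m) : Set ℕ) by
            rw [Finset.mem_coe, Finset.mem_filter, Finset.mem_Icc]
            exact ⟨hm, odd_two_mul_add_one j⟩)
        refine ⟨2 * d, ?_, by rw [hψe, hdj]⟩
        rw [Finset.mem_coe, Nat.mem_divisors]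
        exact ⟨Nat.mul_dvd_mul_left 2 (Nat.dvd_of_mem_divisors hd), hn.ne'⟩
    · intro d hd
      by_cases ho : Odd d
      · rw [hψo d ho]
        exact Nat.Coprime.mul_right (Nat.coprime_two_right.2 ho) (hc₀ d (hdiv_odd d hd ho))
      · obtain ⟨c, hc, rfl⟩ := hdiv_even d hd ho
        rw [hψe]
        exact Nat.Coprime.mul_left (Nat.coprime_two_left.2 (hm₁ c hc).2) (hc₁ c hc)
  · obtain ⟨ψ, hψ, hc⟩ := exists_coprime_bijection hsf hodd rfl hω
      (evenlySpread_Icc (2 ^ n.primeFactors.card)) (by norm_num)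
    exact matchable_of_bijOn hψ hc
end

section
/- Every squarefree positive integer is matchable. -/
open Finset

/-- The standard primitive `p`-th root of unity in `ℂ`. -/
noncomputable def zeta (p : ℕ) : ℂ := Complex.exp (2 * Real.pi * Complex.I / p)

/-- The product of the roots of unity `zeta p` over the primes `p` dividing `d`. -/
noncomputable def omega (d : ℕ) : ℂ := ∏ p ∈ d.primeFactors, zeta p

lemma zeta_pow_eq_one {p : ℕ} (hp : p.Prime) (m : ℕ) : zeta p ^ m = 1 ↔ p ∣ m :=
  (Complex.isPrimitiveRoot_exp p hp.ne_zero).pow_eq_one_iff_dvd m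

lemma omega_ne_zero (d : ℕ) : omega d ≠ 0 :=
  Finset.prod_ne_zero_iff.mpr fun _ _ => Complex.exp_ne_zero _

lemma omega_pow_eq_one {n d p : ℕ} (hsf : Squarefree n) (hd : d ∣ n) (hp : p ∈ n.primeFactors) :
    omega d ^ (n / p) = 1 ↔ p ∉ d.primeFactors := by
  have hn : n ≠ 0 := hsf.ne_zero
  have hpp := Nat.prime_of_mem_primeFactors hp
  have hpn := Nat.dvd_of_mem_primeFactors hp
  have hother : ∀ q ∈ d.primeFactors, q ≠ p → zeta q ^ (n / p) = 1 := by
    intro q hq hqp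
    have hqq := Nat.prime_of_mem_primeFactors hq
    rw [zeta_pow_eq_one hqq]
    have hqn : q ∣ p * (n / p) := by
      rw [Nat.mul_div_cancel' hpn]
      exact (Nat.dvd_of_mem_primeFactors hq).trans hd
    exact (hqq.dvd_mul.mp hqn).resolve_left fun h => hqp ((Nat.prime_dvd_prime_iff_eq hqq hpp).mp h)
  have hself : zeta p ^ (n / p) ≠ 1 := by
    rw [Ne, zeta_pow_eq_one hpp]
    intro h
    have h2 : p * p ∣ n := by
      rw [← Nat.mul_div_cancel' hpn]
      exact mul_dvd_mul_left p h
    exact hpp.one_lt.ne' (Nat.isUnit_iff.mp (hsf p h2))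
  rw [omega, ← Finset.prod_pow]
  constructor
  · intro h hpd
    rw [Finset.prod_eq_single_of_mem p hpd hother] at h
    exact hself h
  · intro hpd
    exact Finset.prod_eq_one fun q hq => hother q hq fun h => hpd (h ▸ hq)

lemma omega_inj {n d e : ℕ} (hsf : Squarefree n) (hd : d ∣ n) (he : e ∣ n)
    (h : omega d = omega e) : d = e := by
  have hn : n ≠ 0 := hsf.ne_zero
  have hpf : d.primeFactors = e.primeFactors := by
    ext p
    by_cases hp : p ∈ n.primeFactors
    · have h1 := omega_pow_eq_one hsf hd hp
      have h2 := omega_pow_eq_one hsf he hp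
      rw [h] at h1
      exact not_iff_not.mp (h1.symm.trans h2)
    · exact ⟨fun h' => absurd (Nat.primeFactors_mono hd hn h') hp,
        fun h' => absurd (Nat.primeFactors_mono he hn h') hp⟩
  rw [← Nat.prod_primeFactors_of_squarefree (hsf.squarefree_of_dvd hd), hpf,
    Nat.prod_primeFactors_of_squarefree (hsf.squarefree_of_dvd he)]

lemma prod_one_sub_zeta_pow {d : ℕ} (hsf : Squarefree d) (m : ℕ) :
    ∏ p ∈ d.primeFactors, (1 - zeta p ^ m) =
      ∑ e ∈ d.divisors, (ArithmeticFunction.moebius e : ℂ) * omega e ^ m := by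
  have h := ArithmeticFunction.IsMultiplicative.prodPrimeFactors_one_sub_of_squarefree
    (ArithmeticFunction.prodPrimeFactors fun p => zeta p ^ m)
    (ArithmeticFunction.IsMultiplicative.prodPrimeFactors _) hsf
  have hl : ∀ p ∈ d.primeFactors,
      1 - (ArithmeticFunction.prodPrimeFactors fun p => zeta p ^ m) p = 1 - zeta p ^ m := by
    intro p hp
    have hpp := Nat.prime_of_mem_primeFactors hp
    rw [ArithmeticFunction.prodPrimeFactors_apply hpp.ne_zero, hpp.primeFactors,
      Finset.prod_singleton]
  rw [← Finset.prod_congr rfl hl, h]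
  refine Finset.sum_congr rfl fun e he => ?_
  rw [ArithmeticFunction.prodPrimeFactors_apply (Nat.pos_of_mem_divisors he).ne', omega,
    Finset.prod_pow]

lemma coprime_of_prod_ne_zero {d m : ℕ} (hd : d ≠ 0)
    (h : ∏ p ∈ d.primeFactors, (1 - zeta p ^ m) ≠ 0) : Nat.gcd d m = 1 := by
  refine Nat.Coprime.gcd_eq_one (Nat.coprime_of_dvd fun p hp hpd hpm => ?_)
  have := Finset.prod_ne_zero_iff.mp h p (Nat.mem_primeFactors.mpr ⟨hp, hpd, hd⟩)
  rw [(zeta_pow_eq_one hp m).mpr hpm, sub_self] at this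
  exact this rfl

/-- The matrix of the values `∏_{p ∣ d} (1 - ζ p ^ m)`, with rows indexed by the divisors `d` of `n`
in increasing order and columns by `m = 1, …, τ(n)`, is nonsingular. -/
lemma det_ne_zero {n : ℕ} (hsf : Squarefree n) :
    (Matrix.of fun i j : Fin n.divisors.card =>
      ∏ p ∈ (n.divisors.orderEmbOfFin rfl i).primeFactors, (1 - zeta p ^ ((j : ℕ) + 1))).det ≠ 0 := by
  set D := n.divisors.orderEmbOfFin rfl with hD
  have hmem : ∀ i, D i ∈ n.divisors := fun i => Finset.orderEmbOfFin_mem _ rfl i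
  have hdvd : ∀ i, D i ∣ n := fun i => Nat.dvd_of_mem_divisors (hmem i)
  have hDsf : ∀ i, Squarefree (D i) := fun i => hsf.squarefree_of_dvd (hdvd i)
  let U : Matrix (Fin n.divisors.card) (Fin n.divisors.card) ℂ :=
    Matrix.of fun i l => if D l ∣ D i then (ArithmeticFunction.moebius (D l) : ℂ) else 0
  let V := Matrix.vandermonde fun l => omega (D l)
  have hfac : (Matrix.of fun i j : Fin n.divisors.card =>
      ∏ p ∈ (D i).primeFactors, (1 - zeta p ^ ((j : ℕ) + 1))) =
      U * (Matrix.diagonal (fun l => omega (D l)) * V) := by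
    ext i j
    rw [Matrix.of_apply, prod_one_sub_zeta_pow (hDsf i), Matrix.mul_apply]
    have himg : n.divisors = Finset.univ.image D := by
      rw [hD, Finset.image_orderEmbOfFin_univ]
    have hfilter : (D i).divisors = n.divisors.filter (· ∣ D i) := by
      ext e
      simp only [Nat.mem_divisors, Finset.mem_filter]
      exact ⟨fun h => ⟨⟨h.1.trans (hdvd i), hsf.ne_zero⟩, h.1⟩, fun h => ⟨h.2, (hDsf i).ne_zero⟩⟩
    rw [hfilter, Finset.sum_filter, Finset.sum_congr himg fun _ _ => rfl,
      Finset.sum_image fun a _ b _ h => D.injective h]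
    refine Finset.sum_congr rfl fun l _ => ?_
    rw [Matrix.diagonal_mul]
    simp only [U, V, Matrix.of_apply, Matrix.vandermonde_apply]
    split_ifs <;> ring
  have hU : U.det ≠ 0 := by
    -- `D` is increasing, so `D l ∣ D i` forces `l ≤ i`.
    have htri : U.BlockTriangular OrderDual.toDual := by
      intro i l hil
      have hlt : D i < D l := D.strictMono (OrderDual.toDual_lt_toDual.mp hil)
      exact if_neg fun h => absurd (Nat.le_of_dvd (Nat.pos_of_ne_zero (hDsf i).ne_zero) h) hlt.not_ge
    rw [Matrix.det_of_isLowerTriangular U htri, Finset.prod_ne_zero_iff]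
    intro i _
    simp only [U, Matrix.of_apply, dvd_refl, if_true]
    exact_mod_cast ArithmeticFunction.moebius_ne_zero_iff_squarefree.mpr (hDsf i)
  have hV : V.det ≠ 0 := Matrix.det_vandermonde_ne_zero_iff.mpr fun a b hab =>
    D.injective (omega_inj hsf (hdvd a) (hdvd b) hab)
  rw [hfac, Matrix.det_mul, Matrix.det_mul, Matrix.det_diagonal]
  exact mul_ne_zero hU (mul_ne_zero (Finset.prod_ne_zero_iff.mpr fun _ _ => omega_ne_zero _) hV)

theorem stmt_8 (n : ℕ) (hn : 0 < n) (hsf : Squarefree n) : Matchable n := by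
  have hdet := det_ne_zero hsf
  rw [Matrix.det_apply] at hdet
  obtain ⟨σ, -, hσ⟩ := Finset.exists_ne_zero_of_sum_ne_zero hdet
  have hprod := Finset.prod_ne_zero_iff.mp (right_ne_zero_of_smul hσ)
  -- The Leibniz term of `σ` pairs the divisor of index `σ j` with the integer `j + 1`.
  let E := n.divisors.orderIsoOfFin rfl
  let ψ : ℕ → ℕ := fun d => if h : d ∈ n.divisors then (σ.symm (E.symm ⟨d, h⟩) : ℕ) + 1 else 0
  have hψ : ∀ d (h : d ∈ n.divisors), ψ d = (σ.symm (E.symm ⟨d, h⟩) : ℕ) + 1 :=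
    fun d h => dif_pos h
  refine ⟨ψ, ⟨?_, ?_, ?_⟩, ?_⟩
  · intro d hd
    rw [hψ d hd, Finset.mem_coe, Finset.mem_Icc]
    have := (σ.symm (E.symm ⟨d, hd⟩)).isLt
    omega
  · intro a ha b hb hab
    rw [hψ a ha, hψ b hb] at hab
    have h := E.symm.injective (σ.symm.injective (Fin.ext (Nat.succ_injective hab)))
    exact congrArg Subtype.val h
  · intro m hm
    rw [Finset.mem_coe, Finset.mem_Icc] at hm
    let j : Fin n.divisors.card := ⟨m - 1, by omega⟩
    refine ⟨E (σ j), (E (σ j)).2, ?_⟩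
    rw [hψ _ (E (σ j)).2]
    simp only [Subtype.coe_eta, OrderIso.symm_apply_apply, Equiv.symm_apply_apply, j]
    omega
  · intro d hd
    have h := hprod (σ.symm (E.symm ⟨d, hd⟩)) (Finset.mem_univ _)
    have hEd : n.divisors.orderEmbOfFin rfl (E.symm ⟨d, hd⟩) = d := by
      rw [← Finset.coe_orderIsoOfFin_apply]
      exact congrArg Subtype.val (E.apply_symm_apply ⟨d, hd⟩)
    rw [Matrix.of_apply, Equiv.apply_symm_apply, hEd, ← hψ d hd] at h
    exact coprime_of_prod_ne_zero (Nat.pos_of_mem_divisors hd).ne' h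
end

section
/- Let ℓ be a positive integer with ℓ ≤ 44 and let u be a product of ℓ distinct odd primes. Then there exists a coprime matching from D(u) to the set of odd integers in [1, 2^{ℓ+1}]. -/
/-!
Attach to an odd `m ≤ 2 ^ (ℓ + 1)` its pattern `S m`, the set of prime factors of `u` dividing `m`.
A divisor `d` of `u` is coprime to `m` exactly when the prime factors of `d` avoid `S m`. By Hall's
theorem (`hall_condition`) a matching exists as soon as, for every monotone family `U` of subsets of
the prime factors of `u`, the proportion of the `m` with `S m ∈ U` is at most the proportion of all
subsets that lie in `U`. In other words, the random pattern of a uniform `m` should be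
stochastically dominated by a uniform random subset (`domination`).

For that it suffices to reveal the primes in increasing order and to check that, given which primes
below `p` divide `m`, at most half of the odd `m ≤ x` are divisible by `p`
(`sum_dvd_le_sum_not_dvd`). For `p ≤ 11` there are explicit injections from multiples to
non-multiples. For `p ≥ 13`, write `m = k * p ^ a * b`, where `b` is the largest prime factor
exceeding `p` (or `1` if there is none); `k` is the `core` of `m`. The numbers with a given core
are handled separately (`fiber_card_le`), and the comparison comes down to
`2 π(w) ≤ π(13 w)` (`two_mul_pi_le`), which follows from Chebyshev's bounds.
-/

/-- A coprime matching from a finite set `A` of positive integers to a finite set `B`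
is a bijection `ψ : A → B` with `gcd(a, ψ(a)) = 1` for every `a ∈ A`. -/
def CoprimeMatching (A B : Finset ℕ) : Prop :=
  ∃ ψ : ℕ → ℕ, Set.BijOn ψ ↑A ↑B ∧ ∀ a ∈ A, Nat.gcd a (ψ a) = 1

open Finset

/-! ### Doubling of the prime counting function -/

/-- Primes up to `s` number at most `s`, and each larger one contributes at least `log s`
to `θ w ≤ log 4 * w`. -/
lemma pi_upper (w s : ℕ) (hs : 2 ≤ s) :
    (Nat.primeCounting w : ℝ) * Real.log s ≤ s * Real.log s + Real.log 4 * w := by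
  have hlog : 0 ≤ Real.log s := Real.log_natCast_nonneg s
  have hth := Chebyshev.theta_le_log4_mul_x (x := (w : ℝ)) (by positivity)
  rw [Chebyshev.theta_eq_sum_primesLE_log] at hth
  have h1 : #((Nat.primesLE w).filter (· ≤ s)) ≤ s := by
    calc _ ≤ #(Icc 1 s) := by
          refine card_le_card fun q hq => ?_
          rw [mem_filter] at hq
          exact mem_Icc.2 ⟨(Nat.prime_of_mem_primesLE hq.1).one_le, hq.2⟩
      _ = s := by simp
  have h2 : (#((Nat.primesLE w).filter (fun q => ¬ q ≤ s)) : ℝ) * Real.log s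
      ≤ ∑ p ∈ Nat.primesLE w, Real.log p := by
    rw [← nsmul_eq_mul, ← sum_const]
    refine (sum_le_sum fun q hq => ?_).trans
      (sum_le_sum_of_subset_of_nonneg (filter_subset (fun q => ¬ q ≤ s) _)
        fun q _ _ => Real.log_natCast_nonneg q)
    rw [mem_filter] at hq
    refine Real.log_le_log (by positivity) ?_
    exact_mod_cast (not_le.1 hq.2).le
  have h3 : Nat.primeCounting w = #((Nat.primesLE w).filter (· ≤ s)) +
      #((Nat.primesLE w).filter (fun q => ¬ q ≤ s)) := by
    rw [← Nat.primesLE_card_eq_primeCounting, card_filter_add_card_filter_not]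
  rw [h3]; push_cast
  have : (#((Nat.primesLE w).filter (· ≤ s)) : ℝ) * Real.log s ≤ s * Real.log s := by
    gcongr
  linarith

lemma pi_lower (n : ℕ) :
    n * Real.log 2 - Real.log (n + 1) ≤ Nat.primeCounting n * Real.log n :=
  (Chebyshev.psi_ge n).trans (Chebyshev.psi_le_primeCounting_mul_log n)

/-- The range where Chebyshev's upper bound is good enough, applied with `s` just above `√w`. -/
lemma pi_large (w : ℕ) (hw : 1024 ≤ w) :
    2 * Nat.primeCounting w ≤ Nat.primeCounting (13 * w) := by
  have hw' : (1024 : ℝ) ≤ w := by exact_mod_cast hw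
  have hw0 : (0 : ℝ) < w := by linarith
  set r : ℝ := √w with hr
  have hr2 : r ^ 2 = w := Real.sq_sqrt hw0.le
  have hr32 : 32 ≤ r := Real.le_sqrt_of_sq_le (by linarith)
  -- rounding up ensures `s ^ 2 ≥ w`, hence `log s ≥ L / 2`
  set s : ℕ := Nat.sqrt w + 1 with hs
  have hs_le : (s : ℝ) ≤ r + 1 := by
    rw [hs]; push_cast
    have : ((Nat.sqrt w : ℕ) : ℝ) ≤ r := Real.nat_sqrt_le_real_sqrt
    linarith
  have hs_sq : (w : ℝ) ≤ (s : ℝ) ^ 2 := by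
    have := Nat.lt_succ_sqrt' w
    exact_mod_cast this.le
  have hs2 : 2 ≤ s := by
    have : 32 ≤ Nat.sqrt w := Nat.le_sqrt.2 (by omega)
    omega
  have hs0 : (0 : ℝ) < s := by positivity
  set a := Real.log 2 with ha
  have ha1 : 0.6931 < a := by have := Real.log_two_gt_d9; linarith
  have ha2 : a < 0.6932 := by have := Real.log_two_lt_d9; linarith
  have hlog4 : Real.log 4 = 2 * a := by
    rw [show (4 : ℝ) = 2 ^ 2 by norm_num, Real.log_pow, ha]; norm_num
  set L := Real.log w with hL
  have hL10 : 10 * a ≤ L := by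
    have : Real.log 1024 ≤ L := Real.log_le_log (by norm_num) hw'
    rw [show (1024 : ℝ) = 2 ^ 10 by norm_num, Real.log_pow] at this
    exact_mod_cast this
  have hLup : L ≤ r / 16 + 5 := by
    have h1 : L = 2 * Real.log r := by
      rw [hL, ← hr2, Real.log_pow]; norm_num
    have h2 : Real.log (r / 32) ≤ r / 32 - 1 := Real.log_le_sub_one_of_pos (by positivity)
    rw [Real.log_div (by positivity) (by norm_num), show (32 : ℝ) = 2 ^ 5 by norm_num,
      Real.log_pow] at h2
    push_cast at h2
    linarith
  have hlogs : L / 2 ≤ Real.log s := by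
    have := Real.log_le_log hw0 hs_sq
    rw [Real.log_pow] at this
    push_cast at this
    linarith
  have hlogs0 : 0 < Real.log s := by linarith
  have hup := pi_upper w s hs2
  rw [hlog4] at hup
  -- dividing by `log s` and then using `log s ≥ L / 2`
  have hup' : (Nat.primeCounting w : ℝ) * L ≤ s * L + 4 * a * w := by
    by_contra! hcon
    have h1 : 0 < ((Nat.primeCounting w : ℝ) - s) * L := by
      have : 0 < 4 * a * w := by positivity
      linarith
    have h2 : 0 < (Nat.primeCounting w : ℝ) - s :=
      pos_of_mul_pos_left h1 (by linarith)
    nlinarith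
  have hlow := pi_lower (13 * w)
  push_cast at hlow
  have hlog13 : Real.log (13 * w) ≤ 1.4 * L := by
    rw [Real.log_mul (by norm_num) hw0.ne']
    have : Real.log 13 ≤ Real.log (2 ^ 4) := Real.log_le_log (by norm_num) (by norm_num)
    rw [Real.log_pow] at this
    push_cast at this
    linarith
  have hlog14 : Real.log (13 * w + 1) ≤ 1.4 * L := by
    have h0 : Real.log (13 * w + 1) ≤ Real.log (2 ^ 4 * w) :=
      Real.log_le_log (by positivity) (by linarith)
    rw [Real.log_mul (by norm_num) hw0.ne', Real.log_pow] at h0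
    push_cast at h0
    linarith
  have hmain : 2.8 * (s * L + 4 * a * w) + 1.4 * L ≤ 13 * w * a := by
    have h1 : (s : ℝ) * L ≤ (r + 1) * (r / 16 + 5) := by gcongr
    have h2 : 0.6931 * w ≤ a * w := by gcongr
    nlinarith
  have hpi0 : (0 : ℝ) ≤ Nat.primeCounting (13 * w) := by positivity
  have hfin : (2 * Nat.primeCounting w : ℝ) * (1.4 * L) ≤
      Nat.primeCounting (13 * w) * (1.4 * L) := by
    have := mul_le_mul_of_nonneg_left hlog13 hpi0
    linarith
  have := le_of_mul_le_mul_right hfin (by linarith)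
  exact_mod_cast this

/-- For `w ≤ 1024` it is enough to know that primes above `6` are coprime to `6`. -/
lemma pi_mid (w : ℕ) (hw : 28 ≤ w) (hw2 : w ≤ 1024) :
    2 * Nat.primeCounting w ≤ Nat.primeCounting (13 * w) := by
  have hw' : (28 : ℝ) ≤ w := by exact_mod_cast hw
  have hw2' : (w : ℝ) ≤ 1024 := by exact_mod_cast hw2
  have hup : 3 * Nat.primeCounting w ≤ w + 9 := by
    have h := Nat.primeCounting'_add_le (a := 6) (k := 7) (by norm_num) (by norm_num) (w - 6)
    have h6 : Nat.totient 6 = 2 := by decide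
    have h7 : Nat.primeCounting' 7 = 3 := by decide
    rw [h6, h7] at h
    have : Nat.primeCounting w = Nat.primeCounting' (7 + (w - 6)) := by
      rw [Nat.primeCounting]; congr 1; omega
    omega
  have hup' : (3 : ℝ) * Nat.primeCounting w ≤ w + 9 := by exact_mod_cast hup
  have hlow := pi_lower (13 * w)
  push_cast at hlow
  set a := Real.log 2 with ha
  have ha1 : 0.6931 < a := by have := Real.log_two_gt_d9; linarith
  have ha2 : a < 0.6932 := by have := Real.log_two_lt_d9; linarith
  have h14 : Real.log (13 * w + 1) ≤ 9.7048 := by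
    have : Real.log (13 * w + 1) ≤ Real.log (2 ^ 14) :=
      Real.log_le_log (by positivity) (by linarith)
    rw [Real.log_pow] at this
    push_cast at this
    linarith
  have h13 : Real.log (13 * w) ≤ 9.7048 :=
    (Real.log_le_log (by positivity) (by linarith)).trans h14
  have hpi0 : (0 : ℝ) ≤ Nat.primeCounting (13 * w) := by positivity
  have h1 := mul_le_mul_of_nonneg_left h13 hpi0
  have h2 : 0.6931 * w ≤ a * w := by gcongr
  have : (2 * Nat.primeCounting w : ℝ) ≤ Nat.primeCounting (13 * w) := by linarith
  exact_mod_cast this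

lemma two_mul_pi_le (w : ℕ) :
    2 * Nat.primeCounting w ≤ Nat.primeCounting (13 * w) := by
  rcases le_total 1024 w with h | h
  · exact pi_large w h
  rcases le_or_gt 28 w with h' | h'
  · exact pi_mid w h' h
  have hm := Nat.monotone_primeCounting
  rcases le_or_gt 5 w with h5 | h5
  · have e : 2 * Nat.primeCounting 27 ≤ Nat.primeCounting 65 := by decide +kernel
    have := hm (show w ≤ 27 by omega)
    have := hm (show 65 ≤ 13 * w by omega)
    omega
  rcases Nat.eq_zero_or_pos w with rfl | h0
  · simp
  have e : 2 * Nat.primeCounting 4 ≤ Nat.primeCounting 13 := by decide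
  have := hm (show w ≤ 4 by omega)
  have := hm (show 13 ≤ 13 * w by omega)
  omega

/-! ### Primes `p ≥ 13` -/

/-- `cofactor p k b` says that `b` may be the factor complementing the core `k`: either `b = 1` and
all prime factors of `k` are below `p`, or `b` is a prime above `p` that is at least as large as
every prime factor of `k`. -/
def cofactor (p k b : ℕ) : Prop :=
  (b = 1 ∧ ∀ q, q.Prime → q ∣ k → q < p) ∨
    (b.Prime ∧ p < b ∧ ∀ q, q.Prime → q ∣ k → q ≤ b)

open Classical in
/-- The possible cofactors of `k` in `[1, y]`. -/
noncomputable def cofactorsUpTo (p k y : ℕ) : Finset ℕ := (Icc 1 y).filter (cofactor p k)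

open Classical in
/-- The numbers `p ^ a * b ≤ y` with `b` a cofactor of `k`. -/
noncomputable def shiftsUpTo (p k y : ℕ) : Finset ℕ :=
  (Icc 1 y).filter fun n => ∃ a b, cofactor p k b ∧ n = p ^ a * b

/-- With `w = y / p`, the cofactors in `(w, y]` include all primes of that range, unless there are
no cofactors up to `w` at all. -/
lemma two_mul_card_cofactors_le {p k y : ℕ} (hp : 13 ≤ p) (hy : p ≤ y / p) :
    2 * #(cofactorsUpTo p k (y / p)) ≤ #(cofactorsUpTo p k y) := by
  classical
  set w := y / p with hw
  rcases (cofactorsUpTo p k w).eq_empty_or_nonempty with he | ⟨b₀, hb₀⟩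
  · simp [he]
  have hwy : 13 * w ≤ y := (Nat.mul_le_mul_right w hp).trans (Nat.mul_div_le y p)
  have hk : ∀ q, q.Prime → q ∣ k → q ≤ w := by
    simp only [cofactorsUpTo, mem_filter, mem_Icc] at hb₀
    rcases hb₀ with ⟨⟨_, hb⟩, ⟨_, h⟩ | ⟨_, _, h⟩⟩
    · exact fun q h1 h2 => (h q h1 h2).le.trans hy
    · exact fun q h1 h2 => (h q h1 h2).trans hb
  have h1 : #(cofactorsUpTo p k w) ≤ Nat.primeCounting w := by
    rw [← Nat.primesLE_card_eq_primeCounting]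
    -- the prime `2` is never a cofactor, so it can stand in for `1`
    refine card_le_card_of_injOn (fun b => if b = 1 then 2 else b) ?_ ?_
    · intro b hb
      simp only [cofactorsUpTo, coe_filter, mem_Icc, Set.mem_ofPred_eq] at hb
      simp only [mem_coe, Nat.mem_primesLE]
      rcases hb with ⟨⟨_, hbw⟩, ⟨rfl, _⟩ | ⟨hb, _, _⟩⟩
      · simp only [if_true]
        exact ⟨by omega, Nat.prime_two⟩
      · rw [if_neg hb.ne_one]
        exact ⟨hbw, hb⟩
    · intro b hb c hc h
      simp only [cofactorsUpTo, coe_filter, mem_Icc, Set.mem_ofPred_eq, cofactor] at hb hc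
      dsimp only at h
      split_ifs at h <;> omega
  have h2 : Nat.primesLE y \ Nat.primesLE w ∪ cofactorsUpTo p k w ⊆ cofactorsUpTo p k y := by
    intro b hb
    simp only [mem_union, mem_sdiff, Nat.mem_primesLE, cofactorsUpTo, mem_filter, mem_Icc] at hb ⊢
    rcases hb with ⟨⟨hby, hb⟩, hn⟩ | ⟨⟨h1, h2⟩, h3⟩
    · have hwb : w < b := by by_contra! h; exact hn ⟨h, hb⟩
      exact ⟨⟨hb.one_le, hby⟩, .inr ⟨hb, by omega, fun q h1 h2 => (hk q h1 h2).trans hwb.le⟩⟩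
    · exact ⟨⟨h1, by omega⟩, h3⟩
  have h3 : Disjoint (Nat.primesLE y \ Nat.primesLE w) (cofactorsUpTo p k w) := by
    rw [disjoint_left]
    intro b hb hb'
    simp only [mem_sdiff, Nat.mem_primesLE, cofactorsUpTo, mem_filter, mem_Icc] at hb hb'
    exact hb.2 ⟨hb'.1.2, hb.1.2⟩
  have h4 := card_le_card h2
  rw [card_union_of_disjoint h3] at h4
  have h5 := le_card_sdiff (Nat.primesLE w) (Nat.primesLE y)
  rw [Nat.primesLE_card_eq_primeCounting, Nat.primesLE_card_eq_primeCounting] at h5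
  have := two_mul_pi_le w
  have := Nat.monotone_primeCounting hwy
  omega

/-- For a fixed core `k`, the left side bounds the multiples of `p` and the right side counts the
non-multiples. -/
lemma card_shifts_le {p k : ℕ} (hp : 13 ≤ p) (y : ℕ) :
    #(shiftsUpTo p k (y / p)) ≤ #(cofactorsUpTo p k y) := by
  classical
  induction y using Nat.strong_induction_on with
  | _ y ih =>
  -- below `p` the only possible element of `shiftsUpTo` is `1`
  rcases lt_or_ge (y / p) p with hlt | hge
  · rcases (shiftsUpTo p k (y / p)).eq_empty_or_nonempty with he | hne
    · simp [he]
    have key : ∀ n ∈ shiftsUpTo p k (y / p), n = 1 ∧ cofactor p k 1 := by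
      intro n hn
      simp only [shiftsUpTo, mem_filter, mem_Icc] at hn
      obtain ⟨⟨hn1, hn2⟩, a, b, hb, rfl⟩ := hn
      have hb0 : 0 < b := Nat.pos_of_ne_zero (by rintro rfl; simp at hn1)
      have hpa : 0 < p ^ a := by positivity
      have ha : a = 0 := by
        by_contra ha
        have := Nat.le_self_pow ha p
        nlinarith
      subst ha
      rcases hb with ⟨rfl, h⟩ | ⟨_, h, _⟩
      · exact ⟨by simp, .inl ⟨rfl, h⟩⟩
      · rw [pow_zero, one_mul] at hn2
        omega
    have h1 : shiftsUpTo p k (y / p) ⊆ {1} := fun n hn => mem_singleton.2 (key n hn).1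
    refine (card_le_card h1).trans ?_
    rw [card_singleton, Nat.one_le_iff_ne_zero, card_ne_zero]
    obtain ⟨n, hn⟩ := hne
    refine ⟨1, ?_⟩
    have hmem := hn
    simp only [shiftsUpTo, mem_filter, mem_Icc] at hn
    simp only [cofactorsUpTo, mem_filter, mem_Icc]
    have := Nat.div_le_self y p
    exact ⟨⟨le_rfl, by omega⟩, (key n hmem).2⟩
  · have hylt : y / p < y := Nat.div_lt_self (by
      rcases Nat.eq_zero_or_pos y with rfl | h
      · simp at hge; omega
      · exact h) (by omega)
    have h1 := ih _ hylt
    have h2 : shiftsUpTo p k (y / p) ⊆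
        cofactorsUpTo p k (y / p) ∪ (shiftsUpTo p k (y / p / p)).image (p * ·) := by
      intro n hn
      simp only [shiftsUpTo, cofactorsUpTo, mem_union, mem_image, mem_filter, mem_Icc] at hn ⊢
      obtain ⟨⟨hn1, hn2⟩, a, b, hb, rfl⟩ := hn
      rcases a with _ | a
      · left
        simp only [pow_zero, one_mul] at hn1 hn2
        simpa using ⟨⟨hn1, hn2⟩, hb⟩
      · right
        have e : p ^ (a + 1) * b = p * (p ^ a * b) := by ring
        rw [e] at hn1 hn2
        refine ⟨p ^ a * b, ⟨⟨?_, ?_⟩, a, b, hb, rfl⟩, e.symm⟩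
        · exact Nat.pos_of_mul_pos_left hn1
        · rw [Nat.le_div_iff_mul_le (by omega)]; linarith
    have h3 := (card_le_card h2).trans (card_union_le _ _)
    have h4 := card_image_le (s := shiftsUpTo p k (y / p / p)) (f := (p * ·))
    have := two_mul_card_cofactors_le (k := k) hp hge
    omega

/-- The core of `m`: remove all factors `p`, then divide by the largest remaining prime factor if
that factor exceeds `p`. The supremum is `0` when no prime factor remains. -/
noncomputable def core (p m : ℕ) : ℕ :=
  if p < (ordCompl[p] m).primeFactors.sup id then
    ordCompl[p] m / (ordCompl[p] m).primeFactors.sup id else ordCompl[p] m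

lemma core_spec {p m : ℕ} (hp : p.Prime) (hm : m ≠ 0) :
    ¬ p ∣ core p m ∧ ∃ a b, cofactor p (core p m) b ∧ m = core p m * (p ^ a * b) := by
  set r := ordCompl[p] m with hr
  have hr0 : r ≠ 0 := (Nat.ordCompl_pos p hm).ne'
  have hpr : ¬ p ∣ r := Nat.not_dvd_ordCompl hp hm
  have hmr : p ^ m.factorization p * r = m := Nat.ordProj_mul_ordCompl_eq_self m p
  set P := r.primeFactors.sup id with hP
  have hmax : ∀ q, q.Prime → q ∣ r → q ≤ P := fun q h1 h2 =>
    le_sup (f := id) (Nat.mem_primeFactors.2 ⟨h1, h2, hr0⟩)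
  by_cases h : p < P
  · have hc : core p m = r / P := by rw [core, if_pos h]
    obtain ⟨P', hP', hPP'⟩ : ∃ q ∈ r.primeFactors, P = id q := by
      refine exists_mem_eq_sup _ ?_ _
      by_contra hne
      rw [not_nonempty_iff_eq_empty] at hne
      rw [hP, hne] at h
      simp at h
    rw [id] at hPP'
    rw [← hPP', Nat.mem_primeFactors] at hP'
    have hrP : r / P * P = r := Nat.div_mul_cancel hP'.2.1
    have hdvd : r / P ∣ r := Dvd.intro _ hrP
    rw [hc]
    refine ⟨fun h' => hpr (h'.trans hdvd), m.factorization p, P,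
      .inr ⟨hP'.1, h, fun q h1 h2 => hmax q h1 (h2.trans hdvd)⟩, ?_⟩
    rw [mul_left_comm, hrP, hmr]
  · have hc : core p m = r := by rw [core, if_neg h]
    rw [hc]
    refine ⟨hpr, m.factorization p, 1, .inl ⟨rfl, fun q h1 h2 => ?_⟩, ?_⟩
    · refine lt_of_le_of_ne ((hmax q h1 h2).trans (not_lt.1 h)) ?_
      rintro rfl
      exact hpr h2
    · rw [mul_one, mul_comm, hmr]

lemma core_mul {p k b : ℕ} (hp : p.Prime) (hk : ¬ p ∣ k) (hb : cofactor p k b) :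
    core p (k * b) = k := by
  have hk0 : k ≠ 0 := by rintro rfl; simp at hk
  have hpb : ¬ p ∣ b := by
    rcases hb with ⟨rfl, _⟩ | ⟨hb, h, _⟩
    · simpa using hp.ne_one
    · rw [Nat.prime_dvd_prime_iff_eq hp hb]; omega
  have hpkb : ¬ p ∣ k * b := by
    rw [hp.dvd_mul]; tauto
  have hord : ordCompl[p] (k * b) = k * b := by
    rw [Nat.factorization_eq_zero_of_not_dvd hpkb]; simp
  rw [core, hord]
  rcases hb with ⟨rfl, h⟩ | ⟨hb, hpb', h⟩
  · rw [mul_one, if_neg]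
    rw [not_lt]
    refine Finset.sup_le fun q hq => ?_
    exact (h q (Nat.prime_of_mem_primeFactors hq) (Nat.dvd_of_mem_primeFactors hq)).le
  · have : (k * b).primeFactors.sup id = b := by
      refine le_antisymm (Finset.sup_le fun q hq => ?_) ?_
      · rw [Nat.mem_primeFactors] at hq
        rcases hq.1.dvd_mul.1 hq.2.1 with h' | h'
        · exact h q hq.1 h'
        · exact Nat.le_of_dvd hb.pos h'
      · exact le_sup (f := id) (Nat.mem_primeFactors.2
          ⟨hb, dvd_mul_left b k, mul_ne_zero hk0 hb.ne_zero⟩)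
    rw [this, if_pos hpb', Nat.mul_div_cancel _ hb.pos]

/-- The odd integers in `[1, x]`. -/
abbrev odds (x : ℕ) : Finset ℕ := (Icc 1 x).filter (fun m => Odd m)

/-- `m` and `m'` are divisible by the same primes below `p`. -/
def SamePattern (p m m' : ℕ) : Prop := ∀ q, q.Prime → q < p → (q ∣ m ↔ q ∣ m')

lemma samePattern_core {p m : ℕ} (hp : p.Prime) (hm : m ≠ 0) : SamePattern p m (core p m) := by
  obtain ⟨_, a, b, hb, h⟩ := core_spec hp hm
  intro q hq hqp
  constructor
  · intro hd
    rw [h, hq.dvd_mul, hq.dvd_mul] at hd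
    rcases hd with hd | hd | hd
    · exact hd
    · have := (Nat.prime_dvd_prime_iff_eq hq hp).1 (hq.dvd_of_dvd_pow hd)
      omega
    · rcases hb with ⟨rfl, _⟩ | ⟨hb, h', _⟩
      · exact absurd (Nat.dvd_one.1 hd) hq.ne_one
      · have := (Nat.prime_dvd_prime_iff_eq hq hb).1 hd
        omega
  · intro hd
    rw [h]
    exact hd.mul_right _

lemma fiber_card_le {p x k : ℕ} (hp : p.Prime) (hp13 : 13 ≤ p) (hk : ¬ p ∣ k) (hko : Odd k) :
    #(((odds x).filter (p ∣ ·)).filter (core p · = k)) ≤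
      #(((odds x).filter (¬ p ∣ ·)).filter (core p · = k)) := by
  have hk0 : 0 < k := hko.pos
  calc _ ≤ #((shiftsUpTo p k (x / k / p)).image (k * p * ·)) := by
        refine card_le_card fun m hm => ?_
        simp only [mem_filter, mem_Icc] at hm
        obtain ⟨⟨⟨⟨hm1, hmx⟩, _⟩, hpm⟩, rfl⟩ := hm
        obtain ⟨_, a, b, hb, h⟩ := core_spec hp (by omega : m ≠ 0)
        set k := core p m
        rcases a with _ | a
        · exfalso
          rw [pow_zero, one_mul] at h
          rw [h, hp.dvd_mul] at hpm
          rcases hpm with h' | h'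
          · exact hk h'
          · rcases hb with ⟨rfl, _⟩ | ⟨hb, h'', _⟩
            · exact absurd (Nat.dvd_one.1 h') hp.ne_one
            · have := (Nat.prime_dvd_prime_iff_eq hp hb).1 h'
              omega
        · have e : m = k * p * (p ^ a * b) := by rw [h]; ring
          simp only [shiftsUpTo, mem_image, mem_filter, mem_Icc]
          refine ⟨p ^ a * b, ⟨⟨?_, ?_⟩, a, b, hb, rfl⟩, e.symm⟩
          · exact Nat.pos_of_mul_pos_left (e ▸ hm1)
          · rw [Nat.div_div_eq_div_mul, Nat.le_div_iff_mul_le (Nat.mul_pos hk0 hp.pos)]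
            linarith
    _ ≤ #(shiftsUpTo p k (x / k / p)) := card_image_le
    _ ≤ #(cofactorsUpTo p k (x / k)) := card_shifts_le hp13 _
    _ ≤ _ := by
        refine card_le_card_of_injOn (k * ·) ?_ ?_
        · intro b hb
          simp only [cofactorsUpTo, coe_filter, mem_Icc, Set.mem_ofPred_eq, mem_filter] at hb ⊢
          obtain ⟨⟨hb1, hb2⟩, hb⟩ := hb
          refine ⟨⟨⟨⟨Nat.mul_pos hk0 hb1, ?_⟩, hko.mul ?_⟩, ?_⟩, core_mul hp hk hb⟩
          · rw [Nat.le_div_iff_mul_le hk0] at hb2; linarith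
          · rcases hb with ⟨rfl, _⟩ | ⟨hb, h, _⟩
            · exact odd_one
            · exact hb.odd_of_ne_two (by omega)
          · rw [hp.dvd_mul]
            rintro (h | h)
            · exact hk h
            · rcases hb with ⟨rfl, _⟩ | ⟨hb, h', _⟩
              · exact absurd (Nat.dvd_one.1 h) hp.ne_one
              · have := (Nat.prime_dvd_prime_iff_eq hp hb).1 h
                omega
        · intro b _ c _ h
          exact Nat.eq_of_mul_eq_mul_left hk0 h

lemma sum_large {p : ℕ} (hp : p.Prime) (hp13 : 13 ≤ p) (x : ℕ) (g : ℕ → ℕ)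
    (hg : ∀ m m', SamePattern p m m' → g m = g m') :
    ∑ m ∈ (odds x).filter (p ∣ ·), g m ≤ ∑ m ∈ (odds x).filter (¬ p ∣ ·), g m := by
  have hfib : ∀ s ⊆ odds x, ∑ m ∈ s, g m =
      ∑ k ∈ (odds x).image (core p), #(s.filter (core p · = k)) * g k := by
    intro s hs
    rw [← sum_fiberwise_of_maps_to (g := core p) (t := (odds x).image (core p))
      (fun m hm => mem_image_of_mem _ (hs hm))]
    refine sum_congr rfl fun k _ => ?_
    rw [← smul_eq_mul, ← sum_const]
    refine sum_congr rfl fun m hm => ?_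
    rw [mem_filter] at hm
    have hm1 := hs hm.1
    simp only [mem_filter, mem_Icc] at hm1
    rw [hg _ _ (samePattern_core hp (by omega : m ≠ 0)), hm.2]
  rw [hfib _ (filter_subset _ _), hfib _ (filter_subset _ _)]
  refine sum_le_sum fun k hk => Nat.mul_le_mul_right _ ?_
  rw [mem_image] at hk
  obtain ⟨m, hm, rfl⟩ := hk
  simp only [mem_filter, mem_Icc] at hm
  have hm0 : m ≠ 0 := by omega
  obtain ⟨h1, a, b, hb, h⟩ := core_spec hp hm0
  refine fiber_card_le hp hp13 h1 ?_
  have h2 := hm.2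
  rw [h, Nat.odd_mul] at h2
  exact h2.1

/-! ### Primes `p ≤ 11` -/

/-- The comparison of sums follows from an injection `φ` of the odd multiples of `p` into the odd
non-multiples that does not increase `m` and preserves the pattern of smaller primes. -/
lemma sum_of_inj {p : ℕ} (x : ℕ) (g : ℕ → ℕ)
    (hg : ∀ m m', SamePattern p m m' → g m = g m') (φ : ℕ → ℕ)
    (hφ : ∀ m, Odd m → p ∣ m → 1 ≤ φ m ∧ φ m ≤ m ∧ Odd (φ m) ∧ ¬ p ∣ φ m ∧ SamePattern p m (φ m))
    (hinj : ∀ m m', Odd m → p ∣ m → Odd m' → p ∣ m' → φ m = φ m' → m = m') :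
    ∑ m ∈ (odds x).filter (p ∣ ·), g m ≤ ∑ m ∈ (odds x).filter (¬ p ∣ ·), g m := by
  calc _ = ∑ m ∈ (odds x).filter (p ∣ ·), g (φ m) := by
        refine sum_congr rfl fun m hm => hg _ _ ?_
        simp only [mem_filter] at hm
        exact (hφ m hm.1.2 hm.2).2.2.2.2
    _ = ∑ m ∈ ((odds x).filter (p ∣ ·)).image φ, g m := by
        rw [sum_image]
        intro m hm m' hm' h
        simp only [coe_filter, mem_filter, Set.mem_ofPred_eq] at hm hm'
        exact hinj m m' hm.1.2 hm.2 hm'.1.2 hm'.2 h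
    _ ≤ _ := by
        refine sum_le_sum_of_subset fun n hn => ?_
        simp only [mem_image, mem_filter, mem_Icc] at hn ⊢
        obtain ⟨m, ⟨⟨⟨h1, h2⟩, h3⟩, h4⟩, rfl⟩ := hn
        obtain ⟨a, b, c, d, _⟩ := hφ m h3 h4
        exact ⟨⟨⟨a, b.trans h2⟩, c⟩, d⟩

lemma samePattern_of_small {p m m' : ℕ} (hp : p ≤ 11)
    (h2 : 2 < p → (2 ∣ m ↔ 2 ∣ m')) (h3 : 3 < p → (3 ∣ m ↔ 3 ∣ m'))
    (h5 : 5 < p → (5 ∣ m ↔ 5 ∣ m')) (h7 : 7 < p → (7 ∣ m ↔ 7 ∣ m')) :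
    SamePattern p m m' := by
  intro q hq hqp
  have : q < 11 := by omega
  interval_cases q
  all_goals first
    | exact h2 hqp
    | exact h3 hqp
    | exact h5 hqp
    | exact h7 hqp
    | (exfalso; revert hq; decide)

lemma sum_three (x : ℕ) (g : ℕ → ℕ) (hg : ∀ m m', SamePattern 3 m m' → g m = g m') :
    ∑ m ∈ (odds x).filter (3 ∣ ·), g m ≤ ∑ m ∈ (odds x).filter (¬ 3 ∣ ·), g m := by
  refine sum_of_inj x g hg (fun m => m - 2) (fun m ho hd => ?_) fun m m' ho hd ho' hd' h => ?_
  · rw [Nat.odd_iff] at *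
    refine ⟨by omega, by omega, by omega, by omega, samePattern_of_small ?_ ?_ ?_ ?_ ?_⟩ <;> omega
  · rw [Nat.odd_iff] at *
    omega

lemma sum_five (x : ℕ) (g : ℕ → ℕ) (hg : ∀ m m', SamePattern 5 m m' → g m = g m') :
    ∑ m ∈ (odds x).filter (5 ∣ ·), g m ≤ ∑ m ∈ (odds x).filter (¬ 5 ∣ ·), g m := by
  refine sum_of_inj x g hg (fun m => if m % 6 = 5 then m - 4 else m - 6) (fun m ho hd => ?_)
    fun m m' ho hd ho' hd' h => ?_
  · rw [Nat.odd_iff] at ho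
    rw [Nat.odd_iff]
    split_ifs with hc
    all_goals
      refine ⟨by omega, by omega, by omega, by omega, samePattern_of_small ?_ ?_ ?_ ?_ ?_⟩ <;> omega
  · rw [Nat.odd_iff] at *
    split_ifs at h <;> omega

lemma sum_seven (x : ℕ) (g : ℕ → ℕ) (hg : ∀ m m', SamePattern 7 m m' → g m = g m') :
    ∑ m ∈ (odds x).filter (7 ∣ ·), g m ≤ ∑ m ∈ (odds x).filter (¬ 7 ∣ ·), g m := by
  refine sum_of_inj x g hg (fun m => if m < 30 then m / 7 else m - 30) (fun m ho hd => ?_)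
    fun m m' ho hd ho' hd' h => ?_
  · rw [Nat.odd_iff] at ho
    rw [Nat.odd_iff]
    split_ifs with hc
    all_goals
      refine ⟨by omega, by omega, by omega, by omega, samePattern_of_small ?_ ?_ ?_ ?_ ?_⟩ <;> omega
  · rw [Nat.odd_iff] at *
    split_ifs at h <;> omega

/-- Image of an odd multiple `m < 210` of `11`: the quotient `m / 11` when it is at most `9` or
equal to `15`, and one of the primes `13`, `17`, `19`, `23` for the other quotients `11`, `13`,
`17`, `19`. No value is congruent to `0` or to `-210 ≡ -1` modulo `11`, so the values avoid the
multiples of `11` and the image of `m ↦ m - 210`. -/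
def elevenTable (m : ℕ) : ℕ :=
  if m = 121 then 13 else if m = 143 then 17 else if m = 187 then 19 else if m = 209 then 23
  else m / 11

lemma sum_eleven (x : ℕ) (g : ℕ → ℕ) (hg : ∀ m m', SamePattern 11 m m' → g m = g m') :
    ∑ m ∈ (odds x).filter (11 ∣ ·), g m ≤ ∑ m ∈ (odds x).filter (¬ 11 ∣ ·), g m := by
  have hT : ∀ m < 210, m % 2 = 1 → 11 ∣ m → 1 ≤ elevenTable m ∧ elevenTable m ≤ m ∧
      elevenTable m % 2 = 1 ∧ ¬ 11 ∣ elevenTable m ∧ ¬ 11 ∣ elevenTable m + 210 ∧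
      (3 ∣ m ↔ 3 ∣ elevenTable m) ∧ (5 ∣ m ↔ 5 ∣ elevenTable m) ∧
      (7 ∣ m ↔ 7 ∣ elevenTable m) := by
    rintro m hm ho ⟨i, rfl⟩
    have hi : i < 20 := by omega
    interval_cases i
    all_goals first | omega | decide
  have hI : ∀ i < 20, ∀ j < 20, elevenTable (11 * i) = elevenTable (11 * j) →
      i % 2 = 1 → j % 2 = 1 → i = j := by
    decide +kernel
  refine sum_of_inj x g hg (fun m => if m < 210 then elevenTable m else m - 210)
    (fun m ho hd => ?_) fun m m' ho hd ho' hd' h => ?_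
  · rw [Nat.odd_iff] at ho
    rw [Nat.odd_iff]
    split_ifs with hc
    · obtain ⟨a, b, c, d, _, e, f, i⟩ := hT m hc ho hd
      refine ⟨a, b, c, d, samePattern_of_small le_rfl ?_ ?_ ?_ ?_⟩ <;> omega
    · refine ⟨by omega, by omega, by omega, by omega, samePattern_of_small ?_ ?_ ?_ ?_ ?_⟩ <;> omega
  · rw [Nat.odd_iff] at ho ho'
    split_ifs at h with h1 h2 h2
    · obtain ⟨i, rfl⟩ := hd
      obtain ⟨j, rfl⟩ := hd'
      rw [hI i (by omega) j (by omega) h (by omega) (by omega)]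
    · have := (hT m h1 ho hd).2.2.2.2.1
      omega
    · have := (hT m' h2 ho' hd').2.2.2.2.1
      omega
    · omega

/-- Among the odd `m ≤ x` with a prescribed pattern of primes below `p`, at most half are divisible
by `p`; stated for weights `g` that depend on the pattern only. -/
lemma sum_dvd_le_sum_not_dvd {p : ℕ} (hp : p.Prime) (hp2 : p ≠ 2) (x : ℕ) (g : ℕ → ℕ)
    (hg : ∀ m m', SamePattern p m m' → g m = g m') :
    ∑ m ∈ (odds x).filter (p ∣ ·), g m ≤ ∑ m ∈ (odds x).filter (¬ p ∣ ·), g m := by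
  rcases le_or_gt 13 p with h | h
  · exact sum_large hp h x g hg
  interval_cases p
  all_goals first
    | exact sum_three x g hg
    | exact sum_five x g hg
    | exact sum_seven x g hg
    | exact sum_eleven x g hg
    | (exfalso; revert hp hp2; decide)


/-! ### Stochastic domination and Hall's theorem -/

/-- The pattern in `P` of a uniform odd `m ≤ x` is stochastically dominated by a uniform subset of
`P`. The induction removes the largest prime of `P`. -/
lemma domination (x : ℕ) (P : Finset ℕ) (hP : ∀ p ∈ P, p.Prime ∧ p ≠ 2)
    (f : Finset ℕ → ℕ) (hf : Monotone f) :
    2 ^ #P * ∑ m ∈ odds x, f (P.filter (· ∣ m)) ≤ #(odds x) * ∑ T ∈ P.powerset, f T := by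
  induction P using Finset.induction_on_max generalizing f with
  | empty => simp
  | insert p P hlt ih =>
    have hpP : p ∉ P := fun h => lt_irrefl p (hlt p h)
    have hp := hP p (mem_insert_self p P)
    have hf' : Monotone fun T => f T + f (insert p T) := fun A B h =>
      Nat.add_le_add (hf h) (hf (insert_subset_insert p h))
    have h1 := ih (fun q hq => hP q (mem_insert_of_mem hq)) _ hf'
    rw [sum_powerset_insert hpP, ← sum_add_distrib, card_insert_of_notMem hpP]
    refine le_trans ?_ h1
    rw [pow_succ, mul_assoc]
    refine Nat.mul_le_mul_left _ ?_
    -- `δ m` is the gain from adjoining `p` to the pattern `S m`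
    set S : ℕ → Finset ℕ := fun m => P.filter (· ∣ m) with hS
    set δ : ℕ → ℕ := fun m => f (insert p (S m)) - f (S m) with hδ
    have hadd : ∀ m, f (insert p (S m)) = f (S m) + δ m := fun m => by
      have := hf (subset_insert p (S m))
      simp only [hδ]
      omega
    have hsum := sum_dvd_le_sum_not_dvd hp.1 hp.2 x δ (fun m m' h => by
      have : S m = S m' := filter_congr fun q hq =>
        h q (hP q (mem_insert_of_mem hq)).1 (hlt q hq)
      simp only [hδ, this])
    have hl : ∑ m ∈ odds x, f ((insert p P).filter (· ∣ m)) =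
        ∑ m ∈ odds x, f (S m) + ∑ m ∈ (odds x).filter (p ∣ ·), δ m := by
      rw [sum_filter (p ∣ ·), ← sum_add_distrib]
      refine sum_congr rfl fun m _ => ?_
      rw [filter_insert]
      split_ifs
      · exact hadd m
      · rfl
    have hr : ∑ m ∈ odds x, (f (S m) + f (insert p (S m))) =
        2 * ∑ m ∈ odds x, f (S m) + (∑ m ∈ (odds x).filter (p ∣ ·), δ m +
          ∑ m ∈ (odds x).filter (¬ p ∣ ·), δ m) := by
      rw [sum_filter_add_sum_filter_not, mul_sum, ← sum_add_distrib]
      refine sum_congr rfl fun m _ => ?_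
      rw [hadd]; ring
    rw [hl, hr]
    omega

lemma card_odds (n : ℕ) : #(odds (2 * n)) = n := by
  have : odds (2 * n) = (range n).image (fun i => 2 * i + 1) := by
    ext m
    simp only [mem_filter, mem_Icc, mem_image, mem_range]
    constructor
    · rintro ⟨⟨_, h⟩, i, rfl⟩
      exact ⟨i, by omega, rfl⟩
    · rintro ⟨i, hi, rfl⟩
      exact ⟨⟨by omega, by omega⟩, i, rfl⟩
  rw [this, card_image_of_injective _ (fun i j h => by simpa using h), card_range]

/-- Hall's condition: a set `X` of divisors has at least `#X` odd numbers coprime to one of its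
elements. -/
lemma hall_condition {u : ℕ} (hsf : Squarefree u) (hodd : Odd u) (X : Finset ℕ)
    (hX : X ⊆ u.divisors) :
    #X ≤ #((odds (2 * 2 ^ #u.primeFactors)).filter fun m => ∃ d ∈ X, Nat.Coprime d m) := by
  classical
  set P := u.primeFactors with hPdef
  set M := odds (2 * 2 ^ #P) with hM
  have hu0 : u ≠ 0 := hsf.ne_zero
  have hP : ∀ p ∈ P, p.Prime ∧ p ≠ 2 := by
    intro p hp
    refine ⟨Nat.prime_of_mem_primeFactors hp, ?_⟩
    rintro rfl
    exact (Nat.not_even_iff_odd.2 hodd) (even_iff_two_dvd.2 (Nat.dvd_of_mem_primeFactors hp))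
  -- the patterns of the numbers that are coprime to no element of `X`
  let Bad : Finset ℕ → Prop := fun T => ∀ d ∈ X, ∃ q ∈ T, q ∣ d
  have hmono : Monotone fun T => if Bad T then 1 else 0 := by
    intro A B hAB
    dsimp only
    by_cases hA : Bad A
    · have hB : Bad B := fun d hd => by
        obtain ⟨q, hq, h⟩ := hA d hd
        exact ⟨q, hAB hq, h⟩
      rw [if_pos hA, if_pos hB]
    · rw [if_neg hA]; exact Nat.zero_le _
  have hdom := domination (2 * 2 ^ #P) P hP _ hmono
  rw [card_odds, sum_boole, sum_boole] at hdom
  have hdom' : #(M.filter fun m => Bad (P.filter (· ∣ m))) ≤ #(P.powerset.filter Bad) :=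
    Nat.le_of_mul_le_mul_left hdom (by positivity)
  -- the patterns `P \ primeFactors d` for `d ∈ X` are not bad
  have h1 : #X ≤ #(P.powerset.filter fun T => ¬ Bad T) := by
    refine card_le_card_of_injOn (fun d => P \ d.primeFactors) ?_ ?_
    · intro d hd
      simp only [coe_filter, mem_powerset, Set.mem_ofPred_eq]
      refine ⟨sdiff_subset, fun h => ?_⟩
      obtain ⟨q, hq, hqd⟩ := h d hd
      have hdu := Nat.mem_divisors.1 (hX hd)
      rw [mem_sdiff] at hq
      exact hq.2 (Nat.mem_primeFactors.2 ⟨(hP q hq.1).1, hqd, ne_zero_of_dvd_ne_zero hu0 hdu.1⟩)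
    · intro d hd e he h
      have hdu := (Nat.mem_divisors.1 (hX hd)).1
      have heu := (Nat.mem_divisors.1 (hX he)).1
      dsimp only at h
      have hde : d.primeFactors = e.primeFactors := by
        rw [← Finset.sdiff_sdiff_eq_self (Nat.primeFactors_mono hdu hu0),
          ← Finset.sdiff_sdiff_eq_self (Nat.primeFactors_mono heu hu0), ← hPdef, h]
      rw [← Nat.prod_primeFactors_of_squarefree (hsf.squarefree_of_dvd hdu),
        ← Nat.prod_primeFactors_of_squarefree (hsf.squarefree_of_dvd heu), hde]
  have h2 := card_filter_add_card_filter_not (s := P.powerset) Bad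
  have h3 := card_filter_add_card_filter_not (s := M) (fun m => Bad (P.filter (· ∣ m)))
  rw [card_powerset] at h2
  rw [hM, card_odds, ← hM] at h3
  have h4 : #(M.filter fun m => ¬ Bad (P.filter (· ∣ m))) ≤
      #(M.filter fun m => ∃ d ∈ X, Nat.Coprime d m) := by
    refine card_le_card fun m hm => ?_
    rw [mem_filter] at hm ⊢
    refine ⟨hm.1, ?_⟩
    have := hm.2
    simp only [Bad] at this
    push Not at this
    obtain ⟨d, hd, h⟩ := this
    refine ⟨d, hd, Nat.coprime_of_dvd fun q hq hqd hqm => ?_⟩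
    refine h q (mem_filter.2 ⟨Nat.mem_primeFactors.2 ⟨hq, ?_, hu0⟩, hqm⟩) hqd
    exact hqd.trans (Nat.mem_divisors.1 (hX hd)).1
  omega

theorem stmt_9 (ℓ : ℕ) (hℓ : 0 < ℓ) (hℓ44 : ℓ ≤ 44) (u : ℕ)
    (hsf : Squarefree u) (hodd : Odd u) (hω : u.primeFactors.card = ℓ) :
    CoprimeMatching u.divisors
      ((Finset.Icc 1 (2 ^ (ℓ + 1))).filter (fun x => Odd x)) := by
  classical
  subst hω
  rw [pow_succ']
  set M := odds (2 * 2 ^ #u.primeFactors) with hM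
  obtain ⟨ψ, hinj, hψ⟩ := (Finset.all_card_le_biUnion_card_iff_exists_injective
    (fun d : u.divisors => M.filter fun m => Nat.Coprime d m)).1 (by
      intro Y
      have := hall_condition hsf hodd (Y.image Subtype.val) (by
        intro d hd
        obtain ⟨e, _, rfl⟩ := mem_image.1 hd
        exact e.2)
      rw [card_image_of_injective _ Subtype.val_injective] at this
      refine this.trans (card_le_card fun m hm => ?_)
      rw [mem_filter] at hm
      obtain ⟨hmM, d, hd, hc⟩ := hm
      obtain ⟨e, he, rfl⟩ := mem_image.1 hd
      exact mem_biUnion.2 ⟨e, he, mem_filter.2 ⟨hmM, hc⟩⟩)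
  set Ψ : ℕ → ℕ := fun d => if h : d ∈ u.divisors then ψ ⟨d, h⟩ else 0 with hΨ
  have hΨd : ∀ d (h : d ∈ u.divisors), Ψ d = ψ ⟨d, h⟩ := fun d h => dif_pos h
  have hmaps : Set.MapsTo Ψ u.divisors M := fun d hd => by
    rw [hΨd d hd]
    exact (mem_filter.1 (hψ ⟨d, hd⟩)).1
  have hinjOn : Set.InjOn Ψ u.divisors := fun d hd e he h => by
    rw [hΨd d hd, hΨd e he] at h
    exact congrArg Subtype.val (hinj h)
  have hcard : #M ≤ #u.divisors := by
    rw [hM, card_odds, Nat.card_divisors hsf.ne_zero]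
    refine pow_card_le_prod _ _ _ fun q hq => ?_
    have := hsf.ne_zero
    have := (Nat.prime_of_mem_primeFactors hq).factorization_pos_of_dvd this
      (Nat.dvd_of_mem_primeFactors hq)
    omega
  refine ⟨Ψ, ⟨hmaps, hinjOn, surjOn_of_injOn_of_card_le Ψ hmaps hinjOn hcard⟩, fun d hd => ?_⟩
  rw [hΨd d hd]
  exact (mem_filter.1 (hψ ⟨d, hd⟩)).2
end

section
/- Let ℓ be a positive integer with ℓ ≤ 44 and let u be a product of ℓ distinct odd primes. Then there exists a coprime matching from D(u) to the set of integers {1, 2, ..., 2^ℓ}. -/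
open Finset

/-! ### Counting rough numbers -/

/-- Chebyshev's lower bound: `2 ^ n ≤ (n + 1) * lcm(1, …, n)` and `lcm(1, …, n) ≤ n ^ π(n)`. -/
lemma le_mul_primeCounting_add_one {n e : ℕ} (hn : n < 2 ^ e) :
    n ≤ e * (n.primeCounting + 1) := by
  rcases Nat.eq_zero_or_pos n with rfl | hpos
  · simp
  have hlcm : Nat.lcmUpto n ≤ n ^ n.primeCounting := by
    rw [Nat.lcmUpto_eq_prod_pow_log, ← Nat.primesLE_card_eq_primeCounting]
    exact Finset.prod_le_pow_card _ _ _ fun p _ => Nat.pow_log_le_self p hpos.ne'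
  have h : 2 ^ n ≤ 2 ^ (e * (n.primeCounting + 1)) := calc
    2 ^ n ≤ (n + 1) * Nat.lcmUpto n := Chebyshev.two_pow_le_mul_lcmUpto n
    _ ≤ 2 ^ e * (2 ^ e) ^ n.primeCounting :=
      Nat.mul_le_mul hn (hlcm.trans (Nat.pow_le_pow_left hn.le _))
    _ = 2 ^ (e * (n.primeCounting + 1)) := by rw [← pow_mul, ← pow_add]; ring_nf
  exact (Nat.pow_le_pow_iff_right (by norm_num)).1 h

lemma primeCounting_le_half {n : ℕ} (hn : 2 ≤ n) : n.primeCounting ≤ (n + 1) / 2 := by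
  induction n using Nat.strong_induction_on with
  | _ n ih =>
    rcases Nat.lt_or_ge n 5 with h | h
    · interval_cases n <;> decide
    · have h1 := ih (n - 2) (by omega) (by omega)
      obtain ⟨k, rfl⟩ : ∃ k, n = k + 2 := ⟨n - 2, by omega⟩
      have h2 : (k + 2).primeCounting ≤ k.primeCounting + 1 := by
        simp only [Nat.primeCounting, Nat.primeCounting', Nat.count_succ]
        have : ¬ (Nat.Prime (k + 1) ∧ Nat.Prime (k + 2)) := by
          rintro ⟨ha, hb⟩
          rcases ha.eq_two_or_odd with h | h <;> rcases hb.eq_two_or_odd with h' | h' <;> omega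
        split_ifs <;> first | omega | (exfalso; tauto)
      simp only [Nat.add_sub_cancel] at h1
      omega

/-- The number of `o ∈ [1, y]` all of whose prime factors exceed `p`. -/
def roughCount (p y : ℕ) : ℕ := #{o ∈ Icc 1 y | (primorial p).Coprime o}

lemma roughCount_mono (p : ℕ) {y z : ℕ} (h : y ≤ z) : roughCount p y ≤ roughCount p z :=
  card_le_card (filter_subset_filter _ (Icc_subset_Icc_right h))

/-- The number `1` and the primes in `(p, y]` are all counted by `roughCount p y`. -/
lemma primeCounting_lt_roughCount_add {p y : ℕ} (hy : 1 ≤ y) :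
    y.primeCounting + 1 ≤ roughCount p y + p.primeCounting := by
  have key : insert 1 (Nat.primesLE y \ Nat.primesLE p) ⊆
      {o ∈ Icc 1 y | (primorial p).Coprime o} := by
    intro o ho
    rw [mem_insert, mem_sdiff, Nat.mem_primesLE, Nat.mem_primesLE] at ho
    rw [mem_filter, mem_Icc]
    rcases ho with rfl | ⟨⟨h1, h2⟩, h3⟩
    · simpa using hy
    · refine ⟨⟨h2.one_lt.le, h1⟩, ?_⟩
      rw [Nat.coprime_comm, h2.coprime_iff_not_dvd, h2.dvd_primorial_iff]
      tauto
  have h1 := card_le_card key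
  rw [card_insert_of_notMem (by simp [Nat.mem_primesLE, Nat.not_prime_one])] at h1
  have h2 := le_card_sdiff (Nat.primesLE p) (Nat.primesLE y)
  rw [Nat.primesLE_card_eq_primeCounting, Nat.primesLE_card_eq_primeCounting] at h2
  unfold roughCount
  omega

/-- Each full period of length `p#` contributes `φ(p#)` rough numbers. -/
lemma totient_mul_div_le_roughCount (p y : ℕ) :
    (primorial p).totient * (y / primorial p) ≤ roughCount p y := by
  have main : ∀ k, (primorial p).totient * k ≤ roughCount p (k * primorial p) := by
    intro k
    induction k with
    | zero => simp
    | succ k ih =>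
      have h := Nat.filter_coprime_Ico_eq_totient (primorial p) (k * primorial p + 1)
      have hsub : {o ∈ Icc 1 (k * primorial p) | (primorial p).Coprime o} ∪
          {o ∈ Ico (k * primorial p + 1) (k * primorial p + 1 + primorial p) |
            (primorial p).Coprime o} ⊆
          {o ∈ Icc 1 ((k + 1) * primorial p) | (primorial p).Coprime o} := by
        intro o
        rw [add_mul]
        simp only [mem_union, mem_filter, mem_Icc, mem_Ico]
        rintro (⟨h, h'⟩ | ⟨h, h'⟩) <;> exact ⟨by omega, h'⟩
      have h' := card_le_card hsub
      rw [card_union_of_disjoint, h] at h'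
      · unfold roughCount at ih ⊢
        rw [mul_add]
        omega
      · rw [disjoint_left]
        simp only [mem_filter, mem_Icc, mem_Ico]
        omega
  exact (main _).trans (roughCount_mono p (Nat.div_mul_le_self _ _))

lemma le_two_mul_roughCount_of_chebyshev {p x e : ℕ} (hp : 2 ≤ p) (hx : 1 ≤ x)
    (h : p * x < 2 ^ e)
    (hbound : e * (x + p + 1) < 2 * (p * x)) : x ≤ 2 * roughCount p (p * x) := by
  have h1 := le_mul_primeCounting_add_one h
  have h2 := primeCounting_lt_roughCount_add (p := p) (y := p * x) (Nat.mul_pos (by omega) hx)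
  have h3 := primeCounting_le_half hp
  by_contra! h4
  have h5 : 2 * ((p * x).primeCounting + 1) ≤ x + p + 1 := by omega
  have := Nat.mul_le_mul_left e h5
  nlinarith

/-- Here `t = φ(p#)` and `d = p# / p`, so `d ≤ t` says that the density of rough numbers is at
least `1 / p`; the loss in rounding `x / d` down is at most a factor of two. -/
lemma le_two_mul_roughCount_of_totient {p x W t d : ℕ} (hW : primorial p = W)
    (ht : W.totient = t) (hd : W = p * d) (hp : 0 < p) (hdx : d ≤ x) (hd0 : 0 < d) (htd : d ≤ t) :
    x ≤ 2 * roughCount p (p * x) := by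
  have h := totient_mul_div_le_roughCount p (p * x)
  rw [hW, ht, hd, Nat.mul_div_mul_left _ _ hp] at h
  have h1 := Nat.mul_le_mul_right (x / d) htd
  have h2 := Nat.div_add_mod x d
  have h3 := Nat.mod_lt x hd0
  have h4 : 1 ≤ x / d := Nat.div_pos hdx hd0
  nlinarith

lemma totient_510510 : Nat.totient 510510 = 92160 := by
  rw [show 510510 = 30030 * 17 from rfl, Nat.totient_mul (by decide +kernel),
    Nat.totient_prime (by norm_num : Nat.Prime 17)]
  decide +kernel

lemma totient_9699690 : Nat.totient 9699690 = 1658880 := by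
  rw [show 9699690 = 510510 * 19 from rfl, Nat.totient_mul (by decide +kernel), totient_510510,
    Nat.totient_prime (by norm_num : Nat.Prime 19)]

lemma exists_two_pow_bounds {y : ℕ} (hy : 1 ≤ y) (hy' : y ≤ 2 ^ 44) :
    ∃ e ≤ 44, 2 ^ e ≤ y ∧ y < 2 ^ (e + 1) := by
  refine ⟨Nat.log 2 y, ?_, Nat.pow_log_le_self 2 (by omega),
    Nat.lt_pow_succ_log_self (by norm_num) y⟩
  calc Nat.log 2 y ≤ Nat.log 2 (2 ^ 44) := Nat.log_mono_right hy'
    _ = 44 := Nat.log_pow (by norm_num) 44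

/-- Among the integers up to `p * x` at least `x / 2` have all prime factors above `p`. The primes
in `(p, p * x]` suffice when `log₂ (p * x)` is at most about `2 * p`. As `p * x ≤ 2 ^ 44`, this
covers all `p ≥ 23`. For `p ≤ 19` the primes are used below `p#` (explicit counts for `p = 5, 7`), and
the density `φ(p#) / p#` of rough numbers above it. -/
lemma le_two_mul_roughCount {p x : ℕ} (hp : p.Prime) (hp2 : p ≠ 2) (hpx : p ≤ x)
    (hx : p * x ≤ 2 ^ 44) : x ≤ 2 * roughCount p (p * x) := by
  have h3 : 3 ≤ p := by have := hp.two_le; omega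
  rcases Nat.lt_or_ge p 23 with h23 | h23
  · have hcases : p = 3 ∨ p = 5 ∨ p = 7 ∨ p = 11 ∨ p = 13 ∨ p = 17 ∨ p = 19 := by
      interval_cases p <;> first | omega | (exfalso; revert hp; norm_num)
    obtain ⟨e, he, hle, hlt⟩ := exists_two_pow_bounds (y := p * x)
      (Nat.mul_pos (by omega) (by omega)) hx
    rcases hcases with rfl | rfl | rfl | rfl | rfl | rfl | rfl
    · exact le_two_mul_roughCount_of_totient (W := 6) (t := 2) (d := 2) (by decide +kernel)
        (by decide +kernel) rfl
        (by omega) (by omega) (by omega) (by omega)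
    · rcases Nat.lt_or_ge x 6 with h | h
      · have h1 : 3 ≤ roughCount 5 25 := by decide +kernel
        have h2 := roughCount_mono 5 (show 25 ≤ 5 * x by omega)
        omega
      · exact le_two_mul_roughCount_of_totient (W := 30) (t := 8) (d := 6) (by decide +kernel)
          (by decide +kernel) rfl
          (by omega) (by omega) (by omega) (by omega)
    · rcases Nat.lt_or_ge x 30 with h | h
      · have h1 : 12 ≤ roughCount 7 49 := by decide +kernel
        have h1' : 15 ≤ roughCount 7 168 := by decide +kernel
        have h2 := roughCount_mono 7 (show 49 ≤ 7 * x by omega)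
        rcases Nat.lt_or_ge x 24 with h' | h'
        · omega
        · have h2' := roughCount_mono 7 (show 168 ≤ 7 * x by omega)
          omega
      · exact le_two_mul_roughCount_of_totient (W := 210) (t := 48) (d := 30) (by decide +kernel)
          (by decide +kernel) rfl
          (by omega) (by omega) (by omega) (by omega)
    · rcases Nat.lt_or_ge x 210 with h | h
      · refine le_two_mul_roughCount_of_chebyshev (by omega) (by omega) hlt ?_
        interval_cases e <;> omega
      · exact le_two_mul_roughCount_of_totient (W := 2310) (t := 480) (d := 210) (by decide +kernel)
          (by decide +kernel) rfl
          (by omega) (by omega) (by omega) (by omega)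
    · rcases Nat.lt_or_ge x 2310 with h | h
      · refine le_two_mul_roughCount_of_chebyshev (by omega) (by omega) hlt ?_
        interval_cases e <;> omega
      · exact le_two_mul_roughCount_of_totient (W := 30030) (t := 5760) (d := 2310)
          (by decide +kernel) (by decide +kernel) rfl
          (by omega) (by omega) (by omega) (by omega)
    · rcases Nat.lt_or_ge x 30030 with h | h
      · refine le_two_mul_roughCount_of_chebyshev (by omega) (by omega) hlt ?_
        interval_cases e <;> omega
      · exact le_two_mul_roughCount_of_totient (W := 510510) (t := 92160) (d := 30030)
          (by decide +kernel) totient_510510 rfl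
          (by omega) (by omega) (by omega) (by omega)
    · rcases Nat.lt_or_ge x 510510 with h | h
      · refine le_two_mul_roughCount_of_chebyshev (by omega) (by omega) hlt ?_
        interval_cases e <;> omega
      · exact le_two_mul_roughCount_of_totient (W := 9699690) (t := 1658880) (d := 510510)
          (by decide +kernel) totient_9699690 rfl
          (by omega) (by omega) (by omega) (by omega)
  · obtain ⟨e, he, hle, hlt⟩ := exists_two_pow_bounds (y := p * x)
      (Nat.mul_pos (by omega) (by omega)) hx
    refine le_two_mul_roughCount_of_chebyshev (by omega) (by omega) hlt ?_
    rcases Nat.lt_or_ge p 47 with h47 | h47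
    -- Once `p` is replaced by its bounds `23` and `46`, each dyadic range of `y = p * x` gives a
    -- linear problem; for `p ≥ 47` the worst exponent, `e + 1 = 45`, suffices.
    · have h1 : 23 * x ≤ p * x := Nat.mul_le_mul_right x h23
      have h2 : 23 * 23 ≤ p * x := Nat.mul_le_mul h23 (h23.trans hpx)
      have h5 : (e + 1) * (x + p + 1) ≤ (e + 1) * (x + 47) := Nat.mul_le_mul_left _ (by omega)
      refine h5.trans_lt ?_
      generalize p * x = y at *
      interval_cases e <;> omega
    · have h5 : (e + 1) * (x + p + 1) ≤ 45 * (x + p + 1) := Nat.mul_le_mul_right _ (by omega)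
      refine h5.trans_lt ?_
      nlinarith

/-! ### At most half of each class is divisible by the next prime -/

/-- The odd integers in `[1, Y]` divisible by no element of `R`. -/
def oddFree (R : Finset ℕ) (Y : ℕ) : Finset ℕ := {o ∈ Icc 1 Y | Odd o ∧ ∀ r ∈ R, ¬ r ∣ o}

lemma mem_oddFree {R : Finset ℕ} {Y o : ℕ} :
    o ∈ oddFree R Y ↔ (1 ≤ o ∧ o ≤ Y) ∧ Odd o ∧ ∀ r ∈ R, ¬ r ∣ o := by
  simp [oddFree]

lemma two_mul_card_oddFree_le (R : Finset ℕ) (Y : ℕ) : 2 * #(oddFree R Y) ≤ Y + 1 := by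
  have h : #(oddFree R Y) ≤ #(range ((Y + 1) / 2)) := by
    refine card_le_card_of_injOn (fun o => o / 2) ?_ ?_
    · intro o ho
      obtain ⟨h1, ⟨k, hk⟩, h3⟩ := mem_oddFree.1 (mem_coe.1 ho)
      simp only [coe_range, Set.mem_Iio]
      omega
    · intro o ho o' ho' h
      obtain ⟨h1, ⟨k, hk⟩, h3⟩ := mem_oddFree.1 (mem_coe.1 ho)
      obtain ⟨h1', ⟨k', hk'⟩, h3'⟩ := mem_oddFree.1 (mem_coe.1 ho')
      simp only at h
      omega
  rw [card_range] at h
  omega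

/-- With `x = Y / p`, the multiples of `p` on the left are the `p * k` with `k ∈ oddFree R x`. For
`x < p` the same `k` are on the right, as `p ∤ k`. For `x ≥ p` there are at most `(x + 1) / 2` such
`k`, and the right-hand side contains all numbers up to `p * x`
without prime factors `≤ p`. -/
lemma card_oddFree_dvd_le {R : Finset ℕ} {p Y : ℕ} (hR : ∀ r ∈ R, r.Prime ∧ r < p)
    (hp : p.Prime) (hp2 : p ≠ 2) (hY : Y ≤ 2 ^ 44) :
    #{o ∈ oddFree R Y | p ∣ o} ≤ #{o ∈ oddFree R Y | ¬ p ∣ o} := by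
  set x := Y / p with hx
  have hpx : p * x ≤ Y := Nat.mul_div_le Y p
  have hxY : x ≤ Y := Nat.div_le_self Y p
  have h1 : #{o ∈ oddFree R Y | p ∣ o} ≤ #(oddFree R x) := by
    refine card_le_card_of_injOn (fun o => o / p) ?_ ?_
    · intro o ho
      obtain ⟨ho, k, rfl⟩ := mem_filter.1 (mem_coe.1 ho)
      obtain ⟨⟨h1, h2⟩, h3, h4⟩ := mem_oddFree.1 ho
      simp only [Nat.mul_div_cancel_left k hp.pos]
      refine mem_coe.2 (mem_oddFree.2 ⟨⟨Nat.pos_of_mul_pos_left h1, ?_⟩, Nat.Odd.of_mul_right h3,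
        fun r hr hrk => h4 r hr (hrk.mul_left p)⟩)
      rw [hx, Nat.le_div_iff_mul_le hp.pos]
      linarith
    · intro o ho o' ho' h
      obtain ⟨-, k, rfl⟩ := mem_filter.1 (mem_coe.1 ho)
      obtain ⟨-, k', rfl⟩ := mem_filter.1 (mem_coe.1 ho')
      simp only [Nat.mul_div_cancel_left _ hp.pos] at h
      rw [h]
  refine h1.trans ?_
  rcases Nat.lt_or_ge x p with hlt | hge
  · refine card_le_card fun k hk => ?_
    obtain ⟨⟨h1, h2⟩, h3⟩ := mem_oddFree.1 hk
    exact mem_filter.2 ⟨mem_oddFree.2 ⟨⟨h1, h2.trans hxY⟩, h3⟩,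
      Nat.not_dvd_of_pos_of_lt h1 (h2.trans_lt hlt)⟩
  · have h2 := two_mul_card_oddFree_le R x
    have h3 := le_two_mul_roughCount hp hp2 hge (hpx.trans hY)
    have h4 : roughCount p (p * x) ≤ #{o ∈ oddFree R Y | ¬ p ∣ o} := by
      refine card_le_card fun o ho => ?_
      rw [mem_filter, mem_Icc] at ho
      obtain ⟨⟨ho1, ho2⟩, hco⟩ := ho
      have hnd : ∀ q : ℕ, q.Prime → q ≤ p → ¬ q ∣ o := fun q hq hqp hqo =>
        hq.one_lt.ne' (Nat.eq_one_of_dvd_coprimes hco (hq.dvd_primorial_iff.2 hqp) hqo)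
      refine mem_filter.2 ⟨mem_oddFree.2 ⟨⟨ho1, ho2.trans hpx⟩, ?_, fun r hr =>
        hnd r (hR r hr).1 (hR r hr).2.le⟩, hnd p hp le_rfl⟩
      rw [← Nat.not_even_iff_odd, even_iff_two_dvd]
      exact hnd 2 Nat.prime_two hp.two_le
    omega

/-- Prescribe which primes of `L` divide `m` (those in `Q`) and the exponent `a` of `2` in `m`. Then
`m = s * o` with `s = 2 ^ a * ∏ Q` and `o` ranging over the odd integers up to `N / s` free of
`L \ Q`; multiplication by `s` does not affect divisibility by `p`. -/
lemma card_fiber_dvd_le {N p a : ℕ} {L Q : Finset ℕ} (hN : N ≤ 2 ^ 44)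
    (hL : ∀ q ∈ L, q.Prime ∧ q ≠ 2 ∧ q < p) (hp : p.Prime) (hp2 : p ≠ 2) :
    #{m ∈ Icc 1 N | ({q ∈ L | q ∣ m} = Q ∧ m.factorization 2 = a) ∧ p ∣ m} ≤
      #{m ∈ Icc 1 N | ({q ∈ L | q ∣ m} = Q ∧ m.factorization 2 = a) ∧ ¬ p ∣ m} := by
  by_cases hQ : Q ⊆ L
  swap
  · rw [card_eq_zero.2]
    · exact Nat.zero_le _
    · refine filter_eq_empty_iff.2 fun m _ h => hQ ?_
      rw [← h.1.1]
      exact filter_subset _ _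
  have hprod : ∀ r : ℕ, r.Prime → r ∉ Q → ¬ r ∣ ∏ q ∈ Q, q := fun r hr hrQ hdvd => by
    obtain ⟨q, hq, hrq⟩ := (hr.prime.dvd_finsetProd_iff _).1 hdvd
    exact hrQ ((Nat.prime_dvd_prime_iff_eq hr (hL q (hQ hq)).1).1 hrq ▸ hq)
  set s := 2 ^ a * ∏ q ∈ Q, q with hs
  have hsr : ∀ r : ℕ, r.Prime → r ≠ 2 → r ∉ Q → ¬ r ∣ s := fun r hr hr2 hrQ hdvd => by
    rcases (hr.dvd_mul).1 hdvd with h | h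
    · exact hr2 ((Nat.prime_dvd_prime_iff_eq hr Nat.prime_two).1 (hr.dvd_of_dvd_pow h))
    · exact hprod r hr hrQ h
  have h2Q : 2 ∉ Q := fun h => (hL 2 (hQ h)).2.1 rfl
  have hpQ : p ∉ Q := fun h => (hL p (hQ h)).2.2.false
  have hQ0 : ∏ q ∈ Q, q ≠ 0 := prod_ne_zero_iff.2 fun q hq => (hL q (hQ hq)).1.ne_zero
  have hs0 : 0 < s := Nat.pos_of_ne_zero (mul_ne_zero (by positivity) hQ0)
  have hR : ∀ r ∈ L \ Q, r.Prime ∧ r < p := fun r hr =>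
    ⟨(hL r (mem_sdiff.1 hr).1).1, (hL r (mem_sdiff.1 hr).1).2.2⟩
  have key := card_oddFree_dvd_le (Y := N / s) hR hp hp2 ((Nat.div_le_self N s).trans hN)
  have hps : ∀ o, p ∣ s * o ↔ p ∣ o := fun o =>
    ⟨fun h => ((hp.dvd_mul).1 h).resolve_left (hsr p hp hp2 hpQ), fun h => h.mul_left s⟩
  have hdvd : ∀ m, ({q ∈ L | q ∣ m} = Q ∧ m.factorization 2 = a) → s ∣ m := by
    rintro m ⟨h1, h2⟩
    refine Nat.Coprime.mul_dvd_of_dvd_of_dvd ?_ ?_ ?_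
    · exact Nat.Coprime.pow_left a <|
        (Nat.prime_two.coprime_iff_not_dvd).2 (hprod 2 Nat.prime_two h2Q)
    · rw [← h2]; exact Nat.ordProj_dvd m 2
    · refine Finset.prod_primes_dvd m (fun q hq => (hL q (hQ hq)).1.prime) fun q hq => ?_
      rw [← h1] at hq
      exact (mem_filter.1 hq).2
  have hfac : ∀ o, o ≠ 0 → (s * o).factorization 2 = a + o.factorization 2 := by
    intro o ho
    rw [Nat.factorization_mul hs0.ne' ho, hs, Nat.factorization_mul (by positivity) hQ0]
    simp [Nat.prime_two.factorization_self,
      Nat.factorization_eq_zero_of_not_dvd (hprod 2 Nat.prime_two h2Q)]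
  refine le_trans ?_ (key.trans ?_)
  · refine card_le_card_of_injOn (fun m => m / s) ?_ ?_
    · intro m hm
      obtain ⟨hm1, hm2, hm3⟩ := mem_filter.1 (mem_coe.1 hm)
      obtain ⟨o, rfl⟩ := hdvd m hm2
      rw [mem_Icc] at hm1
      have ho : 0 < o := Nat.pos_of_mul_pos_left hm1.1
      simp only [Nat.mul_div_cancel_left o hs0]
      refine mem_coe.2 (mem_filter.2 ⟨mem_oddFree.2 ⟨⟨ho, ?_⟩, ?_, ?_⟩, (hps o).1 hm3⟩)
      · rw [Nat.le_div_iff_mul_le hs0]; linarith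
      · have h := hfac o ho.ne'
        rw [hm2.2] at h
        rw [← Nat.not_even_iff_odd, even_iff_two_dvd]
        intro h2
        have := Nat.prime_two.factorization_pos_of_dvd ho.ne' h2
        omega
      · intro r hr hro
        rw [mem_sdiff] at hr
        refine hr.2 ?_
        rw [← hm2.1]
        exact mem_filter.2 ⟨hr.1, hro.mul_left s⟩
    · intro m hm m' hm' h
      obtain ⟨o, rfl⟩ := hdvd m (mem_filter.1 (mem_coe.1 hm)).2.1
      obtain ⟨o', rfl⟩ := hdvd m' (mem_filter.1 (mem_coe.1 hm')).2.1
      simp only [Nat.mul_div_cancel_left _ hs0] at h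
      rw [h]
  · refine card_le_card_of_injOn (fun o => s * o) ?_ ?_
    · intro o ho
      obtain ⟨ho1, ho2⟩ := mem_filter.1 (mem_coe.1 ho)
      obtain ⟨⟨h1, h2⟩, h3, h4⟩ := mem_oddFree.1 ho1
      refine mem_coe.2 (mem_filter.2 ⟨mem_Icc.2 ⟨Nat.mul_pos hs0 h1, ?_⟩, ⟨?_, ?_⟩,
        fun h => ho2 ((hps o).1 h)⟩)
      · exact (Nat.mul_le_mul_left s h2).trans (Nat.mul_div_le N s)
      · ext q
        rw [mem_filter]
        constructor
        · rintro ⟨hqL, hq⟩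
          by_contra hqQ
          rcases ((hL q hqL).1.dvd_mul).1 hq with h | h
          · exact hsr q (hL q hqL).1 (hL q hqL).2.1 hqQ h
          · exact h4 q (mem_sdiff.2 ⟨hqL, hqQ⟩) h
        · intro hq
          exact ⟨hQ hq, ((dvd_prod_of_mem _ hq).mul_left _).mul_right o⟩
      · rw [hfac o (by omega), Nat.factorization_eq_zero_of_not_dvd, add_zero]
        rwa [← even_iff_two_dvd, Nat.not_even_iff_odd]
    · intro o _ o' _ h
      exact Nat.eq_of_mul_eq_mul_left hs0 h

/-! ### Stochastic domination -/

/-- Replacing the event `p ∣ m` by an independent fair coin does not decrease the sum of a monotone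
`f`: on each class of `m` with the same divisors in `L` and the same exponent of `2`, at most half
of the members are divisible by `p`. -/
lemma two_mul_sum_le {N p : ℕ} {L : Finset ℕ} (hN : N ≤ 2 ^ 44)
    (hL : ∀ q ∈ L, q.Prime ∧ q ≠ 2 ∧ q < p) (hp : p.Prime) (hp2 : p ≠ 2)
    {f : Finset ℕ → ℕ} (hf : Monotone f) :
    2 * ∑ m ∈ Icc 1 N, f {q ∈ insert p L | q ∣ m} ≤
      ∑ m ∈ Icc 1 N, (f {q ∈ L | q ∣ m} + f (insert p {q ∈ L | q ∣ m})) := by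
  set key : ℕ → Finset ℕ × ℕ := fun m => ({q ∈ L | q ∣ m}, m.factorization 2) with hkey
  have hmaps : ∀ m ∈ Icc 1 N, key m ∈ (Icc 1 N).image key := fun m hm => mem_image_of_mem _ hm
  rw [← sum_fiberwise_of_maps_to hmaps, ← sum_fiberwise_of_maps_to hmaps, mul_sum]
  refine sum_le_sum ?_
  rintro ⟨Q, a⟩ -
  have hc := card_fiber_dvd_le (Q := Q) (a := a) hN hL hp hp2
  simp only [hkey, Prod.mk.injEq]
  simp only [← filter_filter _ (fun m => p ∣ m), ← filter_filter _ (fun m => ¬ p ∣ m)] at hc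
  set M := {m ∈ Icc 1 N | {q ∈ L | q ∣ m} = Q ∧ m.factorization 2 = a} with hM
  have hMQ : ∀ m ∈ M, {q ∈ L | q ∣ m} = Q := fun m hm => (mem_filter.1 hm).2.1
  rw [← sum_filter_add_sum_filter_not M (fun m => p ∣ m)]
  rw [sum_congr rfl (g := fun _ => f (insert p Q)) (s₁ := {m ∈ M | p ∣ m}),
    sum_congr rfl (g := fun _ => f Q) (s₁ := {m ∈ M | ¬ p ∣ m}),
    sum_congr rfl (g := fun _ => f Q + f (insert p Q)) (s₁ := M)]
  · simp only [sum_const, smul_eq_mul]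
    rw [← card_filter_add_card_filter_not (s := M) (fun m => p ∣ m)]
    have hle : f Q ≤ f (insert p Q) := hf (subset_insert p Q)
    nlinarith [Nat.mul_le_mul hc hle]
  · intro m hm
    rw [hMQ m hm]
  · intro m hm
    rw [mem_filter] at hm
    rw [filter_insert, if_neg hm.2, hMQ m hm.1]
  · intro m hm
    rw [mem_filter] at hm
    rw [filter_insert, if_pos hm.2, hMQ m hm.1]

/-- The set of `q ∈ L` dividing a uniform `m ∈ [1, N]` is stochastically dominated by a uniform
subset of `L`. -/
lemma two_pow_mul_sum_le {N : ℕ} (hN : N ≤ 2 ^ 44) (L : Finset ℕ)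
    (hL : ∀ q ∈ L, q.Prime ∧ q ≠ 2) {f : Finset ℕ → ℕ} (hf : Monotone f) :
    2 ^ #L * ∑ m ∈ Icc 1 N, f {q ∈ L | q ∣ m} ≤ N * ∑ S ∈ L.powerset, f S := by
  induction L using Finset.induction_on_max generalizing f with
  | empty => simp
  | insert p L hmax ih =>
    have hpL : p ∉ L := fun h => (hmax p h).false
    have hL' : ∀ q ∈ L, q.Prime ∧ q ≠ 2 := fun q hq => hL q (mem_insert_of_mem hq)
    have hp := hL p (mem_insert_self p L)
    have hg : Monotone fun S => f S + f (insert p S) := fun S T h =>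
      Nat.add_le_add (hf h) (hf (insert_subset_insert p h))
    have h1 := two_mul_sum_le hN (fun q hq => ⟨(hL' q hq).1, (hL' q hq).2, hmax q hq⟩) hp.1 hp.2 hf
    have h2 := ih hL' hg
    rw [card_insert_of_notMem hpL, pow_succ, mul_assoc, sum_powerset_insert hpL,
      ← sum_add_distrib]
    exact (Nat.mul_le_mul_left _ h1).trans h2

/-! ### The matching -/

theorem stmt_10 (ℓ : ℕ) (hℓ : 0 < ℓ) (hℓ44 : ℓ ≤ 44) (u : ℕ)
    (hsf : Squarefree u) (hodd : Odd u) (hω : u.primeFactors.card = ℓ) :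
    CoprimeMatching u.divisors (Finset.Icc 1 (2 ^ ℓ)) := by
  classical
  have hu0 : u ≠ 0 := hsf.ne_zero
  have hcard : #u.divisors = 2 ^ ℓ := by
    rw [Nat.card_divisors hu0, ← hω]
    refine prod_eq_pow_card fun q hq => ?_
    have h1 := hsf.natFactorization_le_one q
    have h2 := (Nat.prime_of_mem_primeFactors hq).factorization_pos_of_dvd hu0
      (Nat.dvd_of_mem_primeFactors hq)
    omega
  set P := u.primeFactors with hP
  let t : u.divisors → Finset ℕ := fun d => {m ∈ Icc 1 (2 ^ ℓ) | Nat.Coprime d m}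
  have hall : ∀ s : Finset u.divisors, #s ≤ #(s.biUnion t) := by
    intro s
    -- `f` is the indicator of the up-set of those `S` which meet every `d ∈ s`; evaluated at the
    -- primes of `u` dividing `m`, it says that `m` has no neighbour in `s`.
    let f : Finset ℕ → ℕ := fun S => if ∀ d ∈ s, ¬ Disjoint d.1.primeFactors S then 1 else 0
    have hf : Monotone f := by
      intro S T hST
      simp only [f]
      split_ifs with h1 h2
      · rfl
      · exact absurd (fun d hd hdis => h1 d hd (hdis.mono_right hST)) h2
      · exact Nat.zero_le _
      · rfl
    have main := two_pow_mul_sum_le (N := 2 ^ ℓ) (Nat.pow_le_pow_right (by norm_num) hℓ44) P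
      (fun q hq => ⟨Nat.prime_of_mem_primeFactors hq, by
        rintro rfl
        exact Nat.not_even_iff_odd.2 hodd (even_iff_two_dvd.2 (Nat.dvd_of_mem_primeFactors hq))⟩) hf
    rw [hω] at main
    have main' := Nat.le_of_mul_le_mul_left main (by positivity)
    simp only [f, sum_boole, Nat.cast_id] at main'
    have h1 : {m ∈ Icc 1 (2 ^ ℓ) | ∀ d ∈ s, ¬ Disjoint d.1.primeFactors {q ∈ P | q ∣ m}} =
        Icc 1 (2 ^ ℓ) \ s.biUnion t := by
      ext m
      simp only [mem_filter, mem_sdiff, mem_biUnion, t, not_exists, not_and]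
      refine and_congr_right fun hm => forall₂_congr fun d _ => ?_
      have hm0 : m ≠ 0 := by rw [mem_Icc] at hm; omega
      have hd := Nat.mem_divisors.1 d.2
      rw [not_iff_comm]
      simp only [hm, forall_const, not_not]
      rw [← Nat.disjoint_primeFactors (ne_zero_of_dvd_ne_zero hu0 hd.1) hm0, disjoint_left,
        disjoint_left]
      refine forall₂_congr fun q hq => not_congr ?_
      have hqP : q ∈ P := Nat.primeFactors_mono hd.1 hu0 hq
      have hqp := Nat.prime_of_mem_primeFactors hq
      simp [hqP, Nat.mem_primeFactors, hqp, hm0]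
    have h2 : #{S ∈ P.powerset | ∀ d ∈ s, ¬ Disjoint d.1.primeFactors S} ≤ 2 ^ ℓ - #s := by
      -- For `d ∈ s` the complement of the primes of `d` is a set on which `f` vanishes.
      have himg : s.image (fun d => P \ d.1.primeFactors) ⊆ P.powerset := by
        intro S hS
        obtain ⟨d, -, rfl⟩ := mem_image.1 hS
        exact mem_powerset.2 sdiff_subset
      have hci : #(s.image (fun d => P \ d.1.primeFactors)) = #s := by
        refine card_image_of_injOn fun d _ d' _ h => ?_
        have hd := (Nat.mem_divisors.1 d.2).1
        have hd' := (Nat.mem_divisors.1 d'.2).1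
        have hpf : d.1.primeFactors = d'.1.primeFactors := by
          rw [← Finset.sdiff_sdiff_eq_self (Nat.primeFactors_mono hd hu0),
            ← Finset.sdiff_sdiff_eq_self (Nat.primeFactors_mono hd' hu0)]
          exact congrArg (P \ ·) h
        apply Subtype.ext
        rw [← Nat.prod_primeFactors_of_squarefree (hsf.squarefree_of_dvd hd), hpf,
          Nat.prod_primeFactors_of_squarefree (hsf.squarefree_of_dvd hd')]
      rw [← hω, ← card_powerset, ← hci, ← card_sdiff_of_subset himg]
      refine card_le_card fun S hS => ?_
      rw [mem_filter] at hS
      refine mem_sdiff.2 ⟨hS.1, fun h => ?_⟩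
      obtain ⟨d, hd, rfl⟩ := mem_image.1 h
      exact hS.2 d hd disjoint_sdiff
    have hbi : s.biUnion t ⊆ Icc 1 (2 ^ ℓ) := biUnion_subset.2 fun d _ => filter_subset _ _
    have h3 : #s ≤ 2 ^ ℓ := by
      have := card_le_univ s
      rwa [Fintype.card_coe, hcard] at this
    have h4 := card_sdiff_add_card_eq_card hbi
    rw [Nat.card_Icc, Nat.add_sub_cancel] at h4
    rw [h1] at main'
    omega
  obtain ⟨g, hginj, hg⟩ := (Finset.all_card_le_biUnion_card_iff_exists_injective t).1 hall
  have hgm : ∀ d, g d ∈ Icc 1 (2 ^ ℓ) ∧ Nat.Coprime d.1 (g d) := fun d => mem_filter.1 (hg d)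
  refine ⟨fun d => if h : d ∈ u.divisors then g ⟨d, h⟩ else 0, ?_, ?_⟩
  · have hmaps : Set.MapsTo (fun d => if h : d ∈ u.divisors then g ⟨d, h⟩ else 0)
        (u.divisors : Set ℕ) (Icc 1 (2 ^ ℓ) : Finset ℕ) := by
      intro d hd
      simp only [dif_pos (mem_coe.1 hd)]
      exact mem_coe.2 (hgm _).1
    have hinj : Set.InjOn (fun d => if h : d ∈ u.divisors then g ⟨d, h⟩ else 0)
        (u.divisors : Set ℕ) := by
      intro d hd d' hd' h
      simp only [dif_pos (mem_coe.1 hd), dif_pos (mem_coe.1 hd')] at h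
      exact congrArg Subtype.val (hginj h)
    exact ⟨hmaps, hinj, surjOn_of_injOn_of_card_le _ hmaps hinj (by simp [hcard])⟩
  · intro d hd
    simp only [dif_pos hd]
    exact (hgm ⟨d, hd⟩).2
end
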